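/- Let S₁(X) denote the number of integers q ≤ X with q ≡ 1 (mod 4) for which the Erdős conjecture is false mod q. Then limsup_{X→∞} S₁(X)/(X/4) ≤ Σ_{d₁, d₂ odd, d₁ ≥ 3, d₂ ≥ 3} 1/(φ(d₁) φ(d₂) lcm(d₁,d₂)), where the (convergent) double sum is over all pairs of odd integers d₁, d₂ ≥ 3 and φ is Euler's totient function. -/

import Mathlib

open Filter Topology Finset

/-- `f : ℕ → ℤ` is Erdősian mod `q`: periodic with period `q`, takes values `±1`
off multiples of `q`, and `0` on multiples of `q`. -/
def IsErdosian (q : ℕ) (f : ℕ → ℤ) : Prop :=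
  (∀ n : ℕ, 1 ≤ n → f (n + q) = f n) ∧
  (∀ n : ℕ, 1 ≤ n → ¬ q ∣ n → f n = 1 ∨ f n = -1) ∧
  (∀ n : ℕ, 1 ≤ n → q ∣ n → f n = 0)

/-- The Erdős conjecture is false mod `q`: there is an Erdősian function mod `q`
whose partial sums `∑_{n=1}^N f(n)/n` tend to `0`. -/
def ErdosConjectureFalse (q : ℕ) : Prop :=
  ∃ f : ℕ → ℤ, IsErdosian q f ∧
    Tendsto (fun N : ℕ => ∑ n ∈ Finset.Icc 1 N, (f n : ℝ) / n) atTop (nhds 0)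

/-- The Erdős conjecture holds (is true) mod `q`. -/
def ErdosConjectureHolds (q : ℕ) : Prop := ¬ ErdosConjectureFalse q




theorem schwarz_single (a : ℂ) (m : ℕ) : ∀ (f : ℂ → ℂ), Differentiable ℂ f →
    (m : ℕ∞) ≤ analyticOrderAt f a → ∃ g : ℂ → ℂ, Differentiable ℂ g ∧ ∀ w, f w = (w - a) ^ m * g w := by
  induction m with
  | zero => intro f hf _; exact ⟨f, hf, by simp⟩
  | succ m ih =>
    intro f hf hm
    have h0 : f a = 0 := by
      apply apply_eq_zero_of_analyticOrderAt_ne_zero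
      intro h; rw [h] at hm; simp at hm
    have hd : Differentiable ℂ (dslope f a) := by
      rw [← differentiableOn_univ] at hf ⊢
      exact (Complex.differentiableOn_dslope univ_mem).2 hf
    have hfe : f = (fun w => w - a) * dslope f a := by
      ext w
      have := sub_smul_dslope f a w
      simp only [h0, sub_zero, smul_eq_mul] at this
      simp [this]
    have ho : analyticOrderAt f a = 1 + analyticOrderAt (dslope f a) a := by
      conv_lhs => rw [hfe]
      rw [analyticOrderAt_mul (by fun_prop) (hd.analyticAt a)]
      congr 1
      simp
    have h2 : (m : ℕ∞) ≤ analyticOrderAt (dslope f a) a := by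
      rw [ho, Nat.cast_succ, add_comm] at hm
      exact (ENat.add_le_add_iff_left (by simp)).1 hm
    obtain ⟨g, hg, hgf⟩ := ih _ hd h2
    refine ⟨g, hg, fun w => ?_⟩
    conv_lhs => rw [hfe]
    simp [hgf w]; ring

theorem schwarz_multi (m : ℕ) (s : Finset ℂ) : ∀ (f : ℂ → ℂ), Differentiable ℂ f →
    (∀ a ∈ s, (m : ℕ∞) ≤ analyticOrderAt f a) →
    ∃ g : ℂ → ℂ, Differentiable ℂ g ∧ ∀ w, f w = (∏ a ∈ s, (w - a) ^ m) * g w := by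
  classical
  induction s using Finset.induction_on with
  | empty => intro f hf _; exact ⟨f, hf, by simp⟩
  | insert a s ha ih =>
    intro f hf h
    obtain ⟨g, hg, hgf⟩ := schwarz_single a m f hf (h a (by simp))
    have hfe : f = (fun w => (w - a) ^ m) * g := by ext w; simp [hgf]
    obtain ⟨k, hk, hkg⟩ := ih g hg (by
      intro b hb
      have := h b (by simp [hb])
      rw [hfe, analyticOrderAt_mul (by fun_prop) (hg.analyticAt b)] at this
      have h0 : analyticOrderAt (fun w : ℂ => (w - a) ^ m) b = 0 := by
        apply AnalyticAt.analyticOrderAt_eq_zero (by fun_prop) |>.2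
        apply pow_ne_zero
        rw [sub_ne_zero]; rintro rfl; exact ha hb
      simpa [h0] using this)
    refine ⟨k, hk, fun w => ?_⟩
    rw [hgf, hkg, Finset.prod_insert ha]; ring

theorem schwarz_bound (f : ℂ → ℂ) (hf : Differentiable ℂ f) (S m : ℕ) (R B : ℝ)
    (hR : 2 * (S : ℝ) ≤ R) (hS : 1 ≤ S)
    (hz : ∀ s < S, ∀ k < m, iteratedDeriv k f (s : ℂ) = 0)
    (hB : ∀ w : ℂ, ‖w‖ ≤ R → ‖f w‖ ≤ B) :
    ∀ s < S, ‖iteratedDeriv m f (s : ℂ)‖ ≤ m.factorial * (B * (2 * S / R) ^ (m * S)) := by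
  classical
  intro s hs
  have hS' : (1 : ℝ) ≤ S := by exact_mod_cast hS
  have hB0 : 0 ≤ B := (norm_nonneg _).trans (hB 0 (by simp; linarith))
  set Z : Finset ℂ := (Finset.range S).image (fun n : ℕ => (n : ℂ)) with hZ
  have hcard : Z.card = S := by
    rw [hZ, Finset.card_image_of_injective _ Nat.cast_injective, Finset.card_range]
  obtain ⟨g, hg, hgf⟩ := schwarz_multi m Z f hf (by
    intro a ha
    obtain ⟨n, hn, rfl⟩ := Finset.mem_image.1 ha
    rw [natCast_le_analyticOrderAt_iff_iteratedDeriv_eq_zero (hf.analyticAt _)]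
    exact fun i hi => hz n (by simpa using hn) i hi)
  have hRp : (0 : ℝ) < R / 2 := by linarith
  have hgb : ∀ w : ℂ, ‖w‖ ≤ R → ‖g w‖ ≤ B * (2 / R) ^ (m * S) := by
    intro w hw
    refine Complex.norm_le_of_forall_mem_frontier_norm_le (U := Metric.ball 0 R)
      Metric.isBounded_ball hg.diffContOnCl ?_ ?_
    · intro z hz
      rw [frontier_ball _ (by linarith)] at hz
      have hzR : ‖z‖ = R := by simpa using hz
      have h1 := hB z hzR.le
      rw [hgf, norm_mul] at h1
      have h2 : (R / 2) ^ (m * S) ≤ ‖∏ a ∈ Z, (z - a) ^ m‖ := by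
        rw [norm_prod]
        calc (R / 2) ^ (m * S) = ∏ a ∈ Z, (R / 2) ^ m := by
              rw [Finset.prod_const, hcard, pow_mul]
          _ ≤ _ := by
            apply Finset.prod_le_prod
            · intros; positivity
            · intro a ha
              obtain ⟨n, hn, rfl⟩ := Finset.mem_image.1 ha
              rw [norm_pow]
              have : (n : ℝ) ≤ S := by
                have := Finset.mem_range.1 hn; exact_mod_cast this.le
              have h3 := norm_sub_norm_le z (n : ℂ)
              rw [hzR, Complex.norm_natCast] at h3
              gcongr
              linarith
      have h3 : (R / 2) ^ (m * S) * ‖g z‖ ≤ B := (by gcongr : _ ≤ _).trans h1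
      rw [show (2 / R : ℝ) = (R / 2)⁻¹ by rw [inv_div], inv_pow, ← div_eq_mul_inv, le_div_iff₀ (by positivity)]
      linarith
    · rw [closure_ball _ (by linarith)]; simpa using hw
  refine Complex.norm_iteratedDeriv_le_of_forall_mem_sphere_norm_le (R := 1) m one_pos hf.diffContOnCl (C := B * (2 * S / R) ^ (m * S)) ?_ |>.trans (by simp)
  intro z hz
  have hz1 : ‖z - s‖ = 1 := by simpa [dist_eq_norm] using hz
  have hsS : (s : ℝ) + 1 ≤ S := by exact_mod_cast hs
  have hzn : ‖z‖ ≤ R := by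
    have : ‖z‖ ≤ ‖z - s‖ + ‖(s : ℂ)‖ := by simpa using norm_add_le (z - s) (s : ℂ)
    rw [hz1, Complex.norm_natCast] at this
    linarith
  rw [hgf, norm_mul]
  have h2 : ‖∏ a ∈ Z, (z - a) ^ m‖ ≤ (S : ℝ) ^ (m * S) := by
    rw [norm_prod]
    calc _ ≤ ∏ a ∈ Z, (S : ℝ) ^ m := by
            apply Finset.prod_le_prod
            · intros; positivity
            · intro a ha
              obtain ⟨n, hn, rfl⟩ := Finset.mem_image.1 ha
              rw [norm_pow]
              gcongr
              have hn' : (n : ℝ) + 1 ≤ S := by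
                have := Finset.mem_range.1 hn; exact_mod_cast this
              have : ‖z - n‖ ≤ ‖z - s‖ + ‖((s : ℂ) - n)‖ := by
                simpa using norm_add_le (z - s) ((s : ℂ) - n)
              have h4 : ‖((s : ℂ) - n)‖ = |(s : ℝ) - n| := by
                rw [← Real.norm_eq_abs, ← Complex.norm_real]; push_cast; rfl
              have h5 : |(s : ℝ) - n| ≤ S - 1 := by
                have : (0:ℝ) ≤ n := by positivity
                have : (0:ℝ) ≤ s := by positivity
                rw [abs_le]; constructor <;> linarith
              linarith
      _ = _ := by rw [Finset.prod_const, hcard, pow_mul]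
  calc _ ≤ (S : ℝ) ^ (m * S) * (B * (2 / R) ^ (m * S)) := by
        gcongr; exact hgb z hzn
    _ = _ := by rw [show (2 * S / R : ℝ) = S * (2 / R) by ring, mul_pow]; ring

theorem expand_bound {Λ A B : Type*} [Fintype Λ] [Fintype A] [Fintype B] [DecidableEq B]
    (w : Λ → ℂ) (z : Λ → B → ℂ) (c : A → B → ℂ) (C Bd : ℝ) (hC : ∀ a b, ‖c a b‖ ≤ C) (N : ℕ)
    (h : ∀ κ : B → ℕ, ∑ b, κ b = N → ‖∑ l, w l * ∏ b, z l b ^ κ b‖ ≤ Bd)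
    (τ : A → ℕ) (hτ : ∑ a, τ a = N) :
    ‖∑ l, w l * ∏ a, (∑ b, c a b * z l b) ^ τ a‖ ≤ (Fintype.card B * C) ^ N * Bd := by
  classical
  have key : ∀ l, ∏ a, (∑ b, c a b * z l b) ^ τ a
      = ∑ j : (Σ a, Fin (τ a)) → B, (∏ i, c i.1 (j i)) * ∏ b, z l b ^ (#{i | j i = b}) := by
    intro l
    have h1 : ∏ a, (∑ b, c a b * z l b) ^ τ a = ∏ i : (Σ a, Fin (τ a)), ∑ b, c i.1 b * z l b := by
      rw [Fintype.prod_sigma]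
      simp
    rw [h1, Finset.prod_univ_sum, Fintype.piFinset_univ]
    refine Finset.sum_congr rfl fun j _ => ?_
    rw [Finset.prod_mul_distrib]
    congr 1
    rw [Finset.prod_comp (fun b => z l b) j]
    refine Finset.prod_subset (Finset.subset_univ _) fun b _ hb => ?_
    rw [Finset.card_eq_zero.2, pow_zero]
    ext i
    simp only [Finset.mem_filter, Finset.mem_univ, true_and, Finset.notMem_empty, iff_false]
    rintro rfl
    exact hb (Finset.mem_image_of_mem _ (Finset.mem_univ _))
  have hcard : Fintype.card (Σ a, Fin (τ a)) = N := by simp [hτ]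
  calc ‖∑ l, w l * ∏ a, (∑ b, c a b * z l b) ^ τ a‖
      = ‖∑ j : (Σ a, Fin (τ a)) → B, (∏ i, c i.1 (j i)) *
          ∑ l, w l * ∏ b, z l b ^ (#{i | j i = b})‖ := by
        congr 1
        simp_rw [key, Finset.mul_sum]
        rw [Finset.sum_comm]
        refine Finset.sum_congr rfl fun j _ => Finset.sum_congr rfl fun l _ => by ring
    _ ≤ ∑ j : (Σ a, Fin (τ a)) → B, C ^ N * Bd := by
        refine norm_sum_le_of_le _ fun j _ => ?_
        rw [norm_mul]
        have h2 : ‖∏ i, c i.1 (j i)‖ ≤ C ^ N := by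
          rw [norm_prod, ← hcard, ← Finset.card_univ, ← Finset.prod_const]
          exact Finset.prod_le_prod (fun _ _ => norm_nonneg _) fun i _ => hC _ _
        have h3 := h (fun b => #{i | j i = b}) (by
          rw [← hcard, ← Finset.card_univ]
          exact (Finset.card_eq_sum_card_fiberwise (f := j) (t := Finset.univ) (fun _ _ => Finset.mem_coe.2 (Finset.mem_univ _))).symm)
        exact mul_le_mul h2 h3 (norm_nonneg _) ((norm_nonneg _).trans h2)
    _ = _ := by
        rw [Finset.sum_const, Finset.card_univ, Fintype.card_fun, hcard, nsmul_eq_mul]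
        push_cast; ring

theorem iteratedDeriv_expsum {Λ : Type*} [Fintype Λ] (a z : Λ → ℂ) (k : ℕ) :
    iteratedDeriv k (fun w : ℂ => ∑ l, a l * Complex.exp (w * z l)) =
      fun w => ∑ l, a l * z l ^ k * Complex.exp (w * z l) := by
  induction k with
  | zero => simp
  | succ k ih =>
    rw [iteratedDeriv_succ, ih]
    ext w
    have : HasDerivAt (fun w : ℂ => ∑ l, a l * z l ^ k * Complex.exp (w * z l))
        (∑ l, a l * z l ^ k * (Complex.exp (w * z l) * (1 * z l))) w := by
      refine HasDerivAt.fun_sum fun l _ => ?_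
      exact (((hasDerivAt_id w).mul_const (z l)).cexp).const_mul _
    rw [this.deriv]
    refine Finset.sum_congr rfl fun l _ => by ring

theorem direction_bound {Λ G : Type*} [Fintype Λ] [Fintype G] [DecidableEq G] [Nonempty G]
    (w : Λ → ℂ) (z : Λ → G → ℂ) (S N : ℕ) (P Y R : ℝ) (hS : 1 ≤ S) (hY : 1 ≤ Y)
    (hR : 2 * (S : ℝ) ≤ R)
    (hw : ∀ l, ‖w l‖ ≤ P) (hz : ∀ l j, ‖z l j‖ ≤ Y)
    (hv : ∀ κ : G → ℕ, ∑ j, κ j < N → ∀ r : G → ℕ, (∀ j, r j < S) →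
      ∑ l, w l * Complex.exp (∑ j, r j * z l j) * ∏ j, z l j ^ κ j = 0)
    (κ : G → ℕ) (hκ : ∑ j, κ j = N) (r : G → ℕ) (hr : ∀ j, r j < S) :
    ∃ m : ℕ, m ≤ N ∧ N ≤ Fintype.card G * m ∧
      ‖∑ l, w l * Complex.exp (∑ j, r j * z l j) * ∏ j, z l j ^ κ j‖ ≤
        m.factorial * ((Fintype.card Λ * (P * Real.exp (Fintype.card G * (S * Y)) * Y ^ N
          * Real.exp (R * Y))) * (2 * S / R) ^ (m * S)) := by
  classical
  obtain ⟨j0, hj0⟩ : ∃ j0, N ≤ Fintype.card G * κ j0 := by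
    by_contra! hcon
    have : ∑ j, Fintype.card G * κ j < ∑ j : G, N :=
      Finset.sum_lt_sum_of_nonempty Finset.univ_nonempty fun j _ => hcon j
    rw [← Finset.mul_sum, hκ] at this
    simp at this
  have hm : κ j0 ≤ N := hκ ▸ Finset.single_le_sum (f := κ) (fun _ _ => Nat.zero_le _) (Finset.mem_univ j0)
  refine ⟨κ j0, hm, hj0, ?_⟩
  set m := κ j0
  set a : Λ → ℂ := fun l => w l * Complex.exp (∑ j ∈ Finset.univ.erase j0, r j * z l j) *
    ∏ j ∈ Finset.univ.erase j0, z l j ^ κ j with ha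
  set h : ℂ → ℂ := fun u => ∑ l, a l * Complex.exp (u * z l j0) with hh
  have hval : ∀ (k s : ℕ), iteratedDeriv k h (s : ℂ) =
      ∑ l, w l * Complex.exp (∑ j, (Function.update r j0 s j : ℕ) * z l j) *
        ∏ j, z l j ^ (Function.update κ j0 k j) := by
    intro k s
    rw [hh, iteratedDeriv_expsum]
    refine Finset.sum_congr rfl fun l _ => ?_
    rw [← Finset.add_sum_erase _ _ (Finset.mem_univ j0), ← Finset.mul_prod_erase _ _ (Finset.mem_univ j0),
      Function.update_self, Function.update_self, Complex.exp_add, ha]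
    have h1 : ∑ x ∈ Finset.univ.erase j0, (Function.update r j0 s x : ℕ) * z l x
        = ∑ x ∈ Finset.univ.erase j0, r x * z l x := by
      refine Finset.sum_congr rfl fun x hx => ?_
      rw [Function.update_of_ne (Finset.ne_of_mem_erase hx)]
    have h2 : ∏ x ∈ Finset.univ.erase j0, z l x ^ (Function.update κ j0 k x)
        = ∏ x ∈ Finset.univ.erase j0, z l x ^ κ x := by
      refine Finset.prod_congr rfl fun x hx => ?_
      rw [Function.update_of_ne (Finset.ne_of_mem_erase hx)]
    rw [h1, h2]; ring
  have hdiff : Differentiable ℂ h := by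
    rw [hh]; fun_prop
  have hP : ∀ l : Λ, 0 ≤ P := fun l => (norm_nonneg _).trans (hw l)
  have hsumκ : ∑ j ∈ Finset.univ.erase j0, κ j ≤ N := by
    rw [← hκ]; exact Finset.sum_le_sum_of_subset (Finset.erase_subset _ _)
  have hal : ∀ l, ‖a l‖ ≤ P * Real.exp (Fintype.card G * (S * Y)) * Y ^ N := by
    intro l
    rw [ha, norm_mul, norm_mul]
    have h1 : ‖Complex.exp (∑ j ∈ Finset.univ.erase j0, r j * z l j)‖ ≤ Real.exp (Fintype.card G * (S * Y)) := by
      refine (Complex.norm_exp_le_exp_norm _).trans (Real.exp_le_exp.2 ?_)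
      refine (norm_sum_le _ _).trans ?_
      calc _ ≤ ∑ j ∈ Finset.univ.erase j0, (S * Y : ℝ) := by
            refine Finset.sum_le_sum fun j _ => ?_
            rw [norm_mul, Complex.norm_natCast]
            have : (r j : ℝ) ≤ S := by exact_mod_cast (hr j).le
            exact mul_le_mul this (hz l j) (norm_nonneg _) (by positivity)
        _ ≤ ∑ j : G, (S * Y : ℝ) :=
            Finset.sum_le_sum_of_subset_of_nonneg (Finset.erase_subset _ _) (fun _ _ _ => by positivity)
        _ = _ := by simp
    have h2 : ‖∏ j ∈ Finset.univ.erase j0, z l j ^ κ j‖ ≤ Y ^ N := by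
      rw [norm_prod]
      calc _ ≤ ∏ j ∈ Finset.univ.erase j0, Y ^ κ j := by
            refine Finset.prod_le_prod (fun _ _ => norm_nonneg _) fun j _ => ?_
            rw [norm_pow]
            exact pow_le_pow_left₀ (norm_nonneg _) (hz l j) _
        _ = Y ^ (∑ j ∈ Finset.univ.erase j0, κ j) := Finset.prod_pow_eq_pow_sum _ _ _
        _ ≤ _ := pow_le_pow_right₀ hY hsumκ
    have := hP l
    gcongr
    exact hw l
  have main := schwarz_bound h hdiff S m R (Fintype.card Λ * (P * Real.exp (Fintype.card G * (S * Y)) * Y ^ N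
          * Real.exp (R * Y))) hR hS (fun s hs k hk => by
      rw [hval]
      apply hv
      · rw [← Finset.add_sum_erase _ _ (Finset.mem_univ j0), Function.update_self]
        rw [← Finset.add_sum_erase _ _ (Finset.mem_univ j0)] at hκ
        have : ∑ x ∈ Finset.univ.erase j0, (Function.update κ j0 k x) = ∑ x ∈ Finset.univ.erase j0, κ x := by
          refine Finset.sum_congr rfl fun x hx => ?_
          rw [Function.update_of_ne (Finset.ne_of_mem_erase hx)]
        omega
      · intro j
        by_cases hj : j = j0
        · subst hj; simpa using hs
        · rw [Function.update_of_ne hj]; exact hr j)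
    (fun u hu => by
      rw [hh]
      refine (norm_sum_le _ _).trans ?_
      rw [← nsmul_eq_mul, ← Finset.card_univ, ← Finset.sum_const]
      refine Finset.sum_le_sum fun l _ => ?_
      rw [norm_mul]
      have h3 : ‖Complex.exp (u * z l j0)‖ ≤ Real.exp (R * Y) := by
        refine (Complex.norm_exp_le_exp_norm _).trans (Real.exp_le_exp.2 ?_)
        rw [norm_mul]
        exact mul_le_mul hu (hz l j0) (norm_nonneg _) ((norm_nonneg _).trans hu)
      exact mul_le_mul (hal l) h3 (norm_nonneg _) ((norm_nonneg _).trans (hal l)))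
    (r j0) (hr j0)
  rw [hval, Function.update_eq_self, Function.update_eq_self] at main
  exact main

open NumberField in
theorem siegel_wrap (K : Type) [Field K] [NumberField K] : ∃ c : ℝ, 1 ≤ c ∧
    ∀ (α β : Type) [Fintype α] [Fintype β] (a : Matrix α β (𝓞 K)) (A : ℝ), a ≠ 0 → 1 ≤ A →
      0 < Fintype.card α → 2 * Fintype.card α ≤ Fintype.card β →
      (∀ k l, house (algebraMap (𝓞 K) K (a k l)) ≤ A) →
      ∃ ξ : β → 𝓞 K, ξ ≠ 0 ∧ a.mulVec ξ = 0 ∧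
        ∀ l, house (ξ l).1 ≤ c * (c * Fintype.card β * A) := by
  classical
  obtain ⟨c₀, hc₀⟩ : ∃ c₀ : ℝ, ∀ (α β : Type) [Fintype α] [Fintype β] (a : Matrix α β (𝓞 K)) (A : ℝ),
      a ≠ 0 → 0 < Fintype.card α → Fintype.card α < Fintype.card β →
      (∀ k l, house (algebraMap (𝓞 K) K (a k l)) ≤ A) →
      ∃ ξ : β → 𝓞 K, ξ ≠ 0 ∧ a.mulVec ξ = 0 ∧
        ∀ l, house (ξ l).1 ≤ c₀ * (c₀ * (Fintype.card β : ℝ) * A) ^ ((Fintype.card α : ℝ) / ((Fintype.card β : ℝ) - Fintype.card α)) :=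
    ⟨_, fun α β _ _ a A ha h0 hab hh =>
      NumberField.house.exists_ne_zero_int_vec_house_le K a ha h0 hab rfl hh rfl⟩
  refine ⟨max 1 |c₀|, le_max_left _ _, fun α β _ _ a A ha hA h0 hab hh => ?_⟩
  obtain ⟨ξ, h1, h2, h3⟩ := hc₀ α β a A ha h0 (by omega) hh
  refine ⟨ξ, h1, h2, fun l => (h3 l).trans ?_⟩
  have hab' : 2 * (Fintype.card α : ℝ) ≤ Fintype.card β := by exact_mod_cast hab
  have h0' : (1 : ℝ) ≤ Fintype.card α := by exact_mod_cast h0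
  set c := max 1 |c₀|
  have hc1 : 1 ≤ c := le_max_left _ _
  have hbase : |c₀ * (Fintype.card β : ℝ) * A| ≤ c * Fintype.card β * A := by
    rw [abs_mul, abs_mul, abs_of_nonneg (by linarith : (0:ℝ) ≤ A), abs_of_nonneg (by positivity : (0:ℝ) ≤ Fintype.card β)]
    gcongr
    exact le_max_right _ _
  have hge1 : 1 ≤ c * Fintype.card β * A := by
    have : 1 ≤ (Fintype.card β : ℝ) := by linarith
    exact one_le_mul_of_one_le_of_one_le (one_le_mul_of_one_le_of_one_le hc1 this) hA
  set e := ((Fintype.card α : ℝ) / ((Fintype.card β : ℝ) - Fintype.card α))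
  have he0 : 0 ≤ e := div_nonneg (by linarith) (by linarith)
  have he1 : e ≤ 1 := (div_le_one (by linarith)).2 (by linarith)
  calc c₀ * (c₀ * (Fintype.card β : ℝ) * A) ^ e ≤ |c₀| * |(c₀ * (Fintype.card β : ℝ) * A) ^ e| := by
        rw [← abs_mul]; exact le_abs_self _
    _ ≤ c * |c₀ * (Fintype.card β : ℝ) * A| ^ e := by
        gcongr
        · exact le_max_right _ _
        · exact Real.abs_rpow_le_abs_rpow _ _
    _ ≤ c * (c * Fintype.card β * A) ^ e := by gcongr
    _ ≤ c * (c * Fintype.card β * A) ^ (1:ℝ) := by gcongr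
    _ = _ := by rw [Real.rpow_one]


set_option maxHeartbeats 1000000 in
theorem numeric_contra (d : ℕ) (hd : 1 ≤ d) (κ : ℝ) (hκ : 0 ≤ κ) :
    ∃ S M : ℕ, 1 ≤ S ∧ 2 * S ≤ M ∧ ∀ N m L E : ℕ, M ^ d ≤ N → m ≤ N → N ≤ d * m →
      L = 2 * S * M ^ (d - 1) → E = d * d * L * S →
      ∀ c c1 c3 C Dr A : ℝ, 0 ≤ c → 0 ≤ c1 → 0 ≤ c3 → 0 ≤ C → 0 ≤ Dr → 0 ≤ A →
        c ≤ Real.exp κ → c1 ≤ Real.exp κ → c3 ≤ Real.exp κ → C ≤ Real.exp κ → Dr ≤ Real.exp κ →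
        A ≤ Real.exp κ →
      ∀ A' P Q U R : ℝ, A' = Dr ^ E * (L * c1) ^ (d * M ^ d) * A ^ E →
        P = c * (c * (L : ℝ) ^ d * A') →
        Q = (L : ℝ) ^ d * (P * (Dr ^ E * (L * c1) ^ N * A ^ E)) →
        R = (N : ℝ) ^ ((1 : ℝ) / d) →
        U = C ^ N * (m.factorial * (((L : ℝ) ^ d * (P * Real.exp (d * (S * (c3 * L))) * (c3 * L) ^ N
          * Real.exp (R * (c3 * L)))) * (2 * S / R) ^ (m * S))) →
        (M : ℝ) ≤ R ∧ Dr ^ E * U * Q ^ (d - 1) < 1 := by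
  obtain ⟨S, hS⟩ : ∃ y : ℕ, y = d ^ 2 * (d ^ 2 + d + 2) := ⟨_, rfl⟩
  have hS1 : 1 ≤ S := hS ▸ Nat.mul_pos (by positivity) (by positivity)
  obtain ⟨l0, hl0⟩ : ∃ y : ℝ, y = Real.log (2 * S) := ⟨_, rfl⟩
  have hS1' : (1 : ℝ) ≤ S := by exact_mod_cast hS1
  have hl0' : 0 ≤ l0 := hl0 ▸ Real.log_nonneg (by linarith)
  obtain ⟨K3, hK3⟩ : ∃ y : ℝ, y = Real.exp κ := ⟨_, rfl⟩
  have hK3p : 0 < K3 := hK3 ▸ Real.exp_pos _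
  -- constants
  obtain ⟨eE, heE⟩ : ∃ y : ℝ, y = 2 * d ^ 2 * S ^ 2 * κ := ⟨_, rfl⟩
  obtain ⟨e0, he0⟩ : ∃ y : ℝ, y = 2 * eE + d * (l0 + κ) := ⟨_, rfl⟩
  obtain ⟨e1, he1⟩ : ∃ y : ℝ, y = 2 * κ + d * (l0 + 1) + e0 := ⟨_, rfl⟩
  obtain ⟨e2, he2⟩ : ∃ y : ℝ, y = d * (l0 + 1) + e1 + (2 * eE + (l0 + κ)) := ⟨_, rfl⟩
  obtain ⟨e3, he3⟩ : ∃ y : ℝ, y = κ + d * (l0 + 1) + e1 + 2 * d * S ^ 2 * K3 + (l0 + κ) + 2 * S * K3 + S * l0 := ⟨_, rfl⟩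
  obtain ⟨e4, he4⟩ : ∃ y : ℝ, y = eE + e3 + (d - 1 : ℕ) * e2 := ⟨_, rfl⟩
  obtain ⟨M0, hM0⟩ := exists_nat_gt (Real.exp e4)
  refine ⟨S, max M0 (2 * S), hS1, le_max_right _ _, ?_⟩
  set M := max M0 (2 * S) with hM
  intro N m L E hN hmN hNm hL hE c c1 c3 C Dr A hc0 hc10 hc30 hC0 hDr0 hA0 hc hc1 hc3 hC hDr hA A' P Q U R hA' hP hQ hR hU
  have hM1 : 1 ≤ M := le_trans (by omega) (le_max_right M0 (2 * S))
  have hMN : M ≤ N := (Nat.le_self_pow (by omega) M).trans hN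
  have hN1 : 1 ≤ N := hM1.trans hMN
  have hN1' : (1 : ℝ) ≤ N := by exact_mod_cast hN1
  obtain ⟨l, hl⟩ : ∃ y : ℝ, y = Real.log N := ⟨_, rfl⟩
  have hl0n : 0 ≤ l := hl ▸ Real.log_nonneg hN1'
  have hexpl : Real.exp l = N := hl ▸ Real.exp_log (by linarith)
  have hlN : l ≤ N := hl ▸ (Real.log_le_sub_one_of_pos (by linarith)).trans (by linarith)
  have hle4 : e4 < l := by
    rw [hl, Real.lt_log_iff_exp_lt (by linarith)]
    refine hM0.trans_le ?_
    exact_mod_cast (le_max_left M0 (2 * S)).trans hMN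
  have hL1 : 1 ≤ L := by rw [hL]; exact Nat.mul_pos (by omega) (by positivity)
  have hL1' : (1 : ℝ) ≤ L := by exact_mod_cast hL1
  have hLN : (L : ℝ) ≤ 2 * S * N := by
    have : L ≤ 2 * S * N := by
      rw [hL]; exact Nat.mul_le_mul_left _ ((Nat.pow_le_pow_right hM1 (by omega)).trans hN)
    exact_mod_cast this
  have hLexp : (L : ℝ) ≤ Real.exp (l0 + l) := by
    rw [Real.exp_add, hexpl, hl0, Real.exp_log (by linarith)]; exact hLN
  have hdp : (0 : ℝ) < d := by exact_mod_cast hd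
  have hRM : (M : ℝ) ≤ R := by
    rw [hR]
    calc (M : ℝ) = ((M : ℝ) ^ d) ^ ((1 : ℝ) / d) := by
          rw [one_div, Real.pow_rpow_inv_natCast (by positivity) (by omega)]
      _ ≤ _ := by
          apply Real.rpow_le_rpow (by positivity) _ (by positivity)
          exact_mod_cast hN
  have hRp : 0 < R := by
    have : (1 : ℝ) ≤ M := by exact_mod_cast hM1
    linarith
  have hRd : R ^ d = N := by
    rw [hR, one_div, Real.rpow_inv_natCast_pow (by positivity) (by omega)]
  have hRL : R * L ≤ 2 * S * N := by
    rw [hL]; push_cast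
    calc R * (2 * S * M ^ (d - 1)) ≤ R * (2 * S * R ^ (d - 1)) := by gcongr
      _ = 2 * S * (R ^ (d - 1) * R) := by ring
      _ = 2 * S * N := by rw [← pow_succ, Nat.sub_add_cancel hd, hRd]
  have hElog : (E : ℝ) * κ ≤ eE * N := by
    rw [hE, heE]; push_cast
    calc (d : ℝ) * d * L * S * κ ≤ d * d * (2 * S * N) * S * κ := by gcongr
      _ = _ := by ring
  have powexp : ∀ (y a : ℝ) (k : ℕ), 0 ≤ y → y ≤ Real.exp a → y ^ k ≤ Real.exp (k * a) := by
    intro y a k hy hya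
    rw [Real.exp_nat_mul]; exact pow_le_pow_left₀ hy hya k
  have hDrE : Dr ^ E ≤ Real.exp (eE * N) := (powexp _ _ _ hDr0 hDr).trans (Real.exp_le_exp.2 hElog)
  have hAE : A ^ E ≤ Real.exp (eE * N) := (powexp _ _ _ hA0 hA).trans (Real.exp_le_exp.2 hElog)
  have hLc1 : L * c1 ≤ Real.exp (l0 + l + κ) := by
    rw [Real.exp_add]; exact mul_le_mul hLexp hc1 hc10 (Real.exp_pos _).le
  have hLd : (L : ℝ) ^ d ≤ Real.exp (d * (l0 + 1) * N) := by
    refine (powexp _ _ _ (by positivity) hLexp).trans (Real.exp_le_exp.2 ?_)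
    rw [mul_assoc]
    gcongr
    calc l0 + l ≤ l0 * N + N := add_le_add (le_mul_of_one_le_right hl0' hN1') hlN
      _ = _ := by ring
  have hA'b : A' ≤ Real.exp (e0 * N + d * (N * l)) := by
    have h1 : (L * c1) ^ (d * M ^ d) ≤ Real.exp (d * N * (l0 + l + κ)) := by
      refine (powexp _ _ _ (by positivity) hLc1).trans (Real.exp_le_exp.2 ?_)
      push_cast
      gcongr
      exact_mod_cast hN
    rw [hA']
    calc _ ≤ Real.exp (eE * N) * Real.exp (d * N * (l0 + l + κ)) * Real.exp (eE * N) := by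
          gcongr
      _ = _ := by rw [← Real.exp_add, ← Real.exp_add]; congr 1; rw [he0]; ring
  have hA'0 : 0 ≤ A' := by rw [hA']; positivity
  have hκN : κ ≤ κ * N := le_mul_of_one_le_right hκ hN1'
  have hPb : P ≤ Real.exp (e1 * N + d * (N * l)) := by
    rw [hP]
    calc _ ≤ Real.exp (κ * N) * (Real.exp (κ * N) * Real.exp (d * (l0 + 1) * N) * Real.exp (e0 * N + d * (N * l))) := by
          have := hc.trans (Real.exp_le_exp.2 hκN)
          gcongr
      _ = _ := by simp only [← Real.exp_add]; congr 1; rw [he1]; ring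
  have hP0 : 0 ≤ P := by rw [hP]; positivity
  have hQb : Q ≤ Real.exp (e2 * N + (d + 1) * (N * l)) := by
    have h1 : (L * c1) ^ N ≤ Real.exp (N * (l0 + l + κ)) := powexp _ _ _ (by positivity) hLc1
    rw [hQ]
    calc _ ≤ Real.exp (d * (l0 + 1) * N) * (Real.exp (e1 * N + d * (N * l)) * (Real.exp (eE * N) * Real.exp (N * (l0 + l + κ)) * Real.exp (eE * N))) := by
          gcongr
      _ = _ := by simp only [← Real.exp_add]; congr 1; rw [he2]; ring
  have hQ0 : 0 ≤ Q := by rw [hQ]; positivity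
  have hc3L : c3 * L ≤ Real.exp (l0 + l + κ) := by
    rw [Real.exp_add, mul_comm]; exact mul_le_mul hLexp hc3 hc30 (Real.exp_pos _).le
  have hfac : (m.factorial : ℝ) ≤ Real.exp (N * l) := by
    have h1 : m.factorial ≤ N ^ N := (Nat.factorial_le hmN).trans (Nat.factorial_le_pow N)
    have h2 : (m.factorial : ℝ) ≤ (N : ℝ) ^ N := by exact_mod_cast h1
    exact h2.trans (powexp _ _ _ (by positivity) hexpl.ge)
  have hlast : (2 * S / R : ℝ) ^ (m * S) ≤ Real.exp (S * l0 * N - S * (N * l) / d ^ 2) := by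
    have hRl : R = Real.exp (l / d) := by
      rw [hR, Real.rpow_def_of_pos (by linarith), ← hl]; congr 1; ring
    have h2S : (2 * S / R : ℝ) = Real.exp (l0 - l / d) := by
      rw [Real.exp_sub, ← hRl, hl0, Real.exp_log (by linarith)]
    rw [h2S, ← Real.exp_nat_mul]
    apply Real.exp_le_exp.2
    push_cast
    have hm' : (m : ℝ) ≤ N := by exact_mod_cast hmN
    have hNm' : (N : ℝ) / d ≤ m := by
      rw [div_le_iff₀ hdp]; have : (N : ℝ) ≤ d * m := by exact_mod_cast hNm
      linarith
    have h1 : m * S * l0 ≤ S * l0 * N := by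
      calc m * S * l0 = S * l0 * m := by ring
        _ ≤ _ := by gcongr
    have h2 : S * (N * l) / d ^ 2 ≤ m * S * (l / d) := by
      calc S * (N * l) / d ^ 2 = (N / d) * S * (l / d) := by field_simp
        _ ≤ _ := by gcongr
    linarith [mul_sub (m * S : ℝ) l0 (l / d)]
  have hUb : U ≤ Real.exp (e3 * N + (d + 2) * (N * l) - S * (N * l) / d ^ 2) := by
    have h1 : C ^ N ≤ Real.exp (N * κ) := powexp _ _ _ hC0 hC
    have h2 : (c3 * L) ^ N ≤ Real.exp (N * (l0 + l + κ)) := powexp _ _ _ (by positivity) hc3L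
    have h3 : Real.exp (d * (S * (c3 * L))) ≤ Real.exp (2 * d * S ^ 2 * K3 * N) := by
      apply Real.exp_le_exp.2
      calc (d * (S * (c3 * L)) : ℝ) ≤ d * (S * (K3 * (2 * S * N))) := by rw [hK3]; gcongr
        _ = _ := by ring
    have h4 : Real.exp (R * (c3 * L)) ≤ Real.exp (2 * S * K3 * N) := by
      apply Real.exp_le_exp.2
      calc R * (c3 * L) = c3 * (R * L) := by ring
        _ ≤ K3 * (2 * S * N) := by rw [hK3]; gcongr
        _ = _ := by ring
    rw [hU]
    calc _ ≤ Real.exp (N * κ) * (Real.exp (N * l) * ((Real.exp (d * (l0 + 1) * N) * (Real.exp (e1 * N + d * (N * l)) *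
            Real.exp (2 * d * S ^ 2 * K3 * N) * Real.exp (N * (l0 + l + κ)) * Real.exp (2 * S * K3 * N))) *
            Real.exp (S * l0 * N - S * (N * l) / d ^ 2))) := by
          gcongr
      _ = _ := by simp only [← Real.exp_add]; congr 1; rw [he3]; ring
  have hU0 : 0 ≤ U := by rw [hU]; positivity
  refine ⟨hRM, ?_⟩
  calc Dr ^ E * U * Q ^ (d - 1) ≤ Real.exp (eE * N) * Real.exp (e3 * N + (d + 2) * (N * l) - S * (N * l) / d ^ 2) *
        Real.exp ((d - 1 : ℕ) * (e2 * N + (d + 1) * (N * l))) := by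
        gcongr
        exact powexp _ _ _ hQ0 hQb
    _ = Real.exp (N * (e4 - l)) := by
        simp only [← Real.exp_add]; congr 1
        rw [he4]
        have hSr : (S : ℝ) * (N * l) / d ^ 2 = (d ^ 2 + d + 2) * (N * l) := by
          rw [hS]; push_cast; field_simp
        rw [hSr]
        push_cast [Nat.cast_sub hd]
        ring
    _ < 1 := by
        rw [Real.exp_lt_one_iff]
        exact mul_neg_of_pos_of_neg (by linarith) (by linarith)


theorem dual_matrix {K : Type} [Field K] [NumberField K] {G : Type} [Fintype G] [DecidableEq G]
    (ψ : K →+* ℂ) (σ : G → K →+* K) (hσ : Function.Injective σ) (b : Module.Basis G ℚ K) :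
    ∃ c : G → G → ℂ, ∀ g h, ∑ j, c g j * ψ (σ h (b j)) = if h = g then 1 else 0 := by
  let Mx : Matrix G G ℂ := Matrix.of fun j h => ψ (σ h (b j))
  have hu : IsUnit Mx := by
    rw [← Matrix.mulVec_injective_iff_isUnit]
    rw [← Matrix.coe_mulVecLin, ← LinearMap.ker_eq_bot, LinearMap.ker_eq_bot']
    intro v hv
    have h1 : ∀ j, ∑ h, v h * ψ (σ h (b j)) = 0 := by
      intro j
      have := congrFun hv j
      simp only [Matrix.mulVecLin_apply, Matrix.mulVec, dotProduct, Pi.zero_apply, Mx,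
        Matrix.of_apply] at this
      rw [← this]
      exact Finset.sum_congr rfl fun _ _ => mul_comm _ _
    have h2 : ∀ y : K, ∑ h, v h * ψ (σ h y) = 0 := by
      intro y
      rw [← b.sum_repr y]
      have : ∀ h, v h * ψ (σ h (∑ i, b.repr y i • b i)) = ∑ i, (b.repr y i : ℂ) * (v h * ψ (σ h (b i))) := by
        intro h
        rw [map_sum, map_sum, Finset.mul_sum]
        refine Finset.sum_congr rfl fun i _ => ?_
        rw [Rat.smul_def, map_mul, map_mul, map_ratCast, map_ratCast]; ring
      rw [Finset.sum_congr rfl fun h _ => this h, Finset.sum_comm]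
      refine Finset.sum_eq_zero fun i _ => ?_
      rw [← Finset.mul_sum, h1, mul_zero]
    have hli := linearIndependent_monoidHom K ℂ
    have hinj : Function.Injective (fun h : G => ((ψ.comp (σ h) : K →+* ℂ) : K →* ℂ)) := by
      intro g h hgh
      apply hσ
      ext y
      apply ψ.injective
      exact DFunLike.congr_fun hgh y
    have hli2 := hli.comp _ hinj
    rw [Fintype.linearIndependent_iff] at hli2
    funext h
    refine hli2 v ?_ h
    funext y
    simp only [Finset.sum_apply, Pi.smul_apply, Function.comp, smul_eq_mul, Pi.zero_apply]
    exact h2 y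
  have hd : IsUnit Mx.det := (Matrix.isUnit_iff_isUnit_det _).1 hu
  have h3 := Matrix.nonsing_inv_mul Mx hd
  refine ⟨fun g j => Mx⁻¹ g j, fun g h => ?_⟩
  have := congrFun (congrFun h3 g) h
  rw [Matrix.mul_apply, Matrix.one_apply] at this
  simp only [Mx, Matrix.of_apply] at this
  simp only [Mx]
  rw [this]
  simp only [eq_comm]

theorem vander_zero {Λ K : Type} [Fintype Λ] [Field K] (z w : Λ → K)
    (hz : Function.Injective z) (h : ∀ k : ℕ, ∑ l, w l * z l ^ k = 0) : w = 0 := by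
  classical
  have hp : ∀ p : Polynomial K, ∑ l, w l * p.eval (z l) = 0 := by
    intro p
    simp only [Polynomial.eval_eq_sum_range, Finset.mul_sum]
    rw [Finset.sum_comm]
    refine Finset.sum_eq_zero fun k _ => ?_
    have : ∀ l, w l * (p.coeff k * z l ^ k) = p.coeff k * (w l * z l ^ k) := fun l => by ring
    simp only [this]
    rw [← Finset.mul_sum, h, mul_zero]
  funext l
  have := hp (Lagrange.basis Finset.univ z l)
  rw [Finset.sum_eq_single l] at this
  · rw [Lagrange.eval_basis_self (hz.injOn) (Finset.mem_univ l), mul_one] at this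
    exact this
  · intro m _ hm
    rw [Lagrange.eval_basis_of_ne hm.symm (Finset.mem_univ m), mul_zero]
  · intro hh; exact absurd (Finset.mem_univ l) hh

theorem house_le_of {K : Type} [Field K] [NumberField K] (y : K) (B : ℝ)
    (h : ∀ φ : K →+* ℂ, ‖φ y‖ ≤ B) : NumberField.house y ≤ B := by
  rw [NumberField.house_eq_sup']
  obtain ⟨φ, _, hφ⟩ := Finset.exists_mem_eq_sup' (univ_nonempty (α := K →+* ℂ)) (fun φ => ‖φ y‖₊)
  rw [hφ]
  exact h φ

theorem coef_bound {K : Type} [Field K] [NumberField K] {G Sx : Type} [Fintype G] [Fintype Sx]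
    (σ : Sx → K →+* K) (α : G → G → K) (n : G → G → ℕ) (τ : Sx → ℕ) (y : K) (D : ℤ) (E : ℕ)
    (A B : ℝ) (hA : 1 ≤ A) (hαA : ∀ i j, NumberField.house (α i j) ≤ A)
    (hD : ∀ i j, IsIntegral ℤ ((D : K) * α i j)) (hy : IsIntegral ℤ y)
    (hyB : NumberField.house y ≤ B) (hn : ∑ i, ∑ j, n i j ≤ E) :
    IsIntegral ℤ ((D : K) ^ E * ((∏ g, σ g y ^ τ g) * ∏ i, ∏ j, α i j ^ n i j)) ∧
    NumberField.house ((D : K) ^ E * ((∏ g, σ g y ^ τ g) * ∏ i, ∏ j, α i j ^ n i j)) ≤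
      |(D : ℝ)| ^ E * B ^ (∑ g, τ g) * A ^ E := by
  constructor
  · have h1 : (D : K) ^ E * ((∏ g, σ g y ^ τ g) * ∏ i, ∏ j, α i j ^ n i j) =
      (D : K) ^ (E - ∑ i, ∑ j, n i j) * ((∏ g, σ g y ^ τ g) * ∏ i, ∏ j, (D * α i j) ^ n i j) := by
      have : (∏ i, ∏ j, ((D : K) * α i j) ^ n i j) =
          (D : K) ^ (∑ i, ∑ j, n i j) * ∏ i, ∏ j, α i j ^ n i j := by
        simp only [mul_pow, Finset.prod_mul_distrib, Finset.prod_pow_eq_pow_sum]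
      rw [this]
      conv_lhs => rw [← Nat.sub_add_cancel hn, pow_add]
      ring
    rw [h1]
    refine IsIntegral.mul (IsIntegral.pow ?_ _) (IsIntegral.mul ?_ ?_)
    · exact isIntegral_algebraMap (R := ℤ) (A := K) (x := D)
    · refine IsIntegral.prod _ fun g _ => IsIntegral.pow ?_ _
      exact hy.map (σ g).toIntAlgHom
    · exact IsIntegral.prod _ fun i _ => IsIntegral.prod _ fun j _ => (hD i j).pow _
  · apply house_le_of
    intro φ
    have hB : 0 ≤ B := (NumberField.house_nonneg y).trans hyB
    have e1 : ‖φ (∏ g, σ g y ^ τ g)‖ ≤ B ^ (∑ g, τ g) := by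
      rw [map_prod, norm_prod, ← Finset.prod_pow_eq_pow_sum]
      refine Finset.prod_le_prod (fun _ _ => norm_nonneg _) fun g _ => ?_
      rw [map_pow, norm_pow]
      refine pow_le_pow_left₀ (norm_nonneg _) ?_ _
      exact (NumberField.norm_embedding_le_house y (φ.comp (σ g))).trans hyB
    have e2 : ‖φ (∏ i, ∏ j, α i j ^ n i j)‖ ≤ A ^ E := by
      refine le_trans ?_ (pow_le_pow_right₀ hA hn)
      rw [map_prod, norm_prod, ← Finset.prod_pow_eq_pow_sum]
      refine Finset.prod_le_prod (fun _ _ => norm_nonneg _) fun i _ => ?_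
      rw [map_prod, norm_prod, ← Finset.prod_pow_eq_pow_sum]
      refine Finset.prod_le_prod (fun _ _ => norm_nonneg _) fun j _ => ?_
      rw [map_pow, norm_pow]
      refine pow_le_pow_left₀ (norm_nonneg _) ?_ _
      exact (NumberField.norm_embedding_le_house _ φ).trans (hαA i j)
    rw [map_mul, map_mul, norm_mul, norm_mul, map_pow, norm_pow, map_intCast, Complex.norm_intCast,
      mul_assoc]
    gcongr


theorem upper_bound {Λ G Sx : Type} [Fintype Λ] [Fintype G] [Fintype Sx] [Nonempty G]
    [DecidableEq G] [DecidableEq Sx] (w : Λ → ℂ) (u : Λ → Sx → ℂ) (z : Λ → G → ℂ)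
    (p : G → Sx → ℂ) (c : Sx → G → ℂ) (hzu : ∀ l j, z l j = ∑ g, p j g * u l g)
    (huz : ∀ l g, u l g = ∑ j, c g j * z l j) (C : ℝ) (hC : ∀ g j, ‖c g j‖ ≤ C) (S N : ℕ)
    (P Y R : ℝ) (hS : 1 ≤ S) (hY : 1 ≤ Y) (hR : 2 * (S : ℝ) ≤ R) (hw : ∀ l, ‖w l‖ ≤ P)
    (hz : ∀ l j, ‖z l j‖ ≤ Y)
    (hv : ∀ τ : Sx → ℕ, ∑ g, τ g < N → ∀ r : G → ℕ, (∀ j, r j < S) →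
      ∑ l, w l * Complex.exp (∑ j, r j * z l j) * ∏ g, u l g ^ τ g = 0)
    (τ : Sx → ℕ) (hτ : ∑ g, τ g = N) (r : G → ℕ) (hr : ∀ j, r j < S) :
    ∃ m ≤ N, N ≤ Fintype.card G * m ∧
      ‖∑ l, w l * Complex.exp (∑ j, r j * z l j) * ∏ g, u l g ^ τ g‖ ≤
      (Fintype.card G * C) ^ N * (m.factorial * ((Fintype.card Λ * (P * Real.exp (Fintype.card G * (S * Y)) * Y ^ N *
        Real.exp (R * Y))) * (2 * S / R) ^ (m * S))) := by
  have hvz : ∀ κ : G → ℕ, ∑ j, κ j < N → ∀ r : G → ℕ, (∀ j, r j < S) →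
      ∑ l, w l * Complex.exp (∑ j, r j * z l j) * ∏ j, z l j ^ κ j = 0 := by
    intro κ hκ r hr
    obtain ⟨C', hC'⟩ : ∃ C' : ℝ, ∀ j g, ‖p j g‖ ≤ C' := by
      refine ⟨∑ j, ∑ g, ‖p j g‖, fun j g => ?_⟩
      exact (Finset.single_le_sum (f := fun g => ‖p j g‖) (fun _ _ => norm_nonneg _) (mem_univ g)).trans
        (Finset.single_le_sum (f := fun j => ∑ g, ‖p j g‖) (fun _ _ => Finset.sum_nonneg fun _ _ => norm_nonneg _) (mem_univ j))
    have := expand_bound (fun l => w l * Complex.exp (∑ j, r j * z l j)) u p C' 0 hC' (∑ j, κ j)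
      (fun τ hτ => by rw [hv τ (hτ ▸ hκ) r hr, norm_zero]) κ rfl
    rw [mul_zero] at this
    have h0 := norm_le_zero_iff.1 this
    rw [← h0]
    exact Finset.sum_congr rfl fun l _ => by simp only [hzu]
  let F : ℕ → ℝ := fun m => (m.factorial * ((Fintype.card Λ * (P * Real.exp (Fintype.card G * (S * Y)) * Y ^ N *
        Real.exp (R * Y))) * (2 * S / R) ^ (m * S)))
  obtain ⟨m, hm, hmax⟩ := Finset.exists_max_image ((range (N + 1)).filter (fun m => N ≤ Fintype.card G * m)) F
    ⟨N, by
      simp only [mem_filter, mem_range]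
      exact ⟨by omega, Nat.le_mul_of_pos_left _ Fintype.card_pos⟩⟩
  simp only [mem_filter, mem_range] at hm hmax
  refine ⟨m, by omega, hm.2, ?_⟩
  have := expand_bound (fun l => w l * Complex.exp (∑ j, r j * z l j)) z c C (F m) hC N
    (fun κ hκ => by
      obtain ⟨m', h1, h2, h3⟩ := direction_bound w z S N P Y R hS hY hR hw hz hvz κ hκ r hr
      exact h3.trans (hmax m' ⟨by omega, h2⟩)) τ hτ
  refine le_trans (le_of_eq ?_) this
  congr 1
  exact Finset.sum_congr rfl fun l _ => by simp only [← huz]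


theorem exp_theta_pow {G : Type} [Fintype G] (θ : G → G → ℂ) (l r : G → ℕ) :
    Complex.exp (∑ j, (r j : ℂ) * ∑ i, (l i : ℂ) * θ i j) = ∏ i, ∏ j, Complex.exp (θ i j) ^ (l i * r j) := by
  rw [Finset.prod_comm, Complex.exp_sum]
  refine Finset.prod_congr rfl fun j _ => ?_
  rw [Finset.mul_sum, Complex.exp_sum]
  refine Finset.prod_congr rfl fun i _ => ?_
  rw [← Complex.exp_nat_mul]
  congr 1; push_cast; ring

theorem one_le_norm_norm {K : Type} [Field K] [NumberField K] (y : K) (hy : IsIntegral ℤ y)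
    (h0 : y ≠ 0) : 1 ≤ ‖Algebra.norm ℚ y‖ := by
  obtain ⟨y', rfl⟩ : ∃ y' : NumberField.RingOfIntegers K, (y' : K) = y := ⟨⟨y, hy⟩, rfl⟩
  have h1 : y' ≠ 0 := by rintro rfl; simp at h0
  have h2 : Algebra.norm ℤ y' ≠ 0 := Algebra.norm_ne_zero_iff.2 h1
  rw [← Algebra.coe_norm_int, Int.norm_cast_rat, Int.norm_eq_abs]
  exact_mod_cast Int.one_le_abs h2

set_option maxHeartbeats 1000000 in
theorem transc {K : Type} [Field K] [NumberField K] {G : Type} [Fintype G] [DecidableEq G]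
    (ψ : K →+* ℂ) (σ : G → K →+* K) (hσ : Function.Injective σ) (b : Module.Basis G ℚ K)
    (hb : ∀ i, IsIntegral ℤ (b i)) (x : G → ℂ) (α : G → G → K)
    (hα : ∀ i j, Complex.exp (∑ g, ψ (σ g (b i * b j)) * x g) = ψ (α i j)) (g0 : G)
    (hx : x g0 = 0) : ∀ g, x g = 0 := by
  classical
  by_contra hcon
  push Not at hcon
  obtain ⟨g1, hg1⟩ := hcon
  have : Nonempty G := ⟨g0⟩
  let Sx := {g : G // x g ≠ 0}
  have hcardSx : Fintype.card Sx ≤ Fintype.card G - 1 := by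
    have : Fintype.card Sx < Fintype.card G := Fintype.card_subtype_lt (x := g0) (by simpa using hx)
    omega
  obtain ⟨d, hd⟩ : ∃ d, d = Fintype.card G := ⟨_, rfl⟩
  have hd1 : 1 ≤ d := hd ▸ Fintype.card_pos
  rw [← hd] at hcardSx
  obtain ⟨cd, hcd⟩ := dual_matrix ψ σ hσ b
  obtain ⟨c, hc1, hsieg⟩ := siegel_wrap K
  obtain ⟨D, hD0, hDint⟩ : ∃ D : ℤ, D ≠ 0 ∧ ∀ i j, IsIntegral ℤ ((D : K) * α i j) := by
    obtain ⟨y, hy, h⟩ := exists_integral_multiples ℤ ℚ (L := K) (Finset.univ.image fun p : G × G => α p.1 p.2)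
    refine ⟨y, hy, fun i j => ?_⟩
    have := h (α i j) (Finset.mem_image.2 ⟨(i, j), mem_univ _, rfl⟩)
    rwa [zsmul_eq_mul] at this
  obtain ⟨θ, hθ⟩ : ∃ θ : G → G → ℂ, ∀ i j, θ i j = ∑ g, ψ (σ g (b i * b j)) * x g := ⟨_, fun _ _ => rfl⟩
  have single2 : ∀ (f : G → G → ℝ), (∀ i j, 0 ≤ f i j) → ∀ i j, f i j ≤ ∑ i, ∑ j, f i j := by
    intro f hf i j
    exact (Finset.single_le_sum (f := fun j => f i j) (fun _ _ => hf _ _) (mem_univ j)).trans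
        (Finset.single_le_sum (f := fun i => ∑ j, f i j) (fun _ _ => Finset.sum_nonneg fun _ _ => hf _ _) (mem_univ i))
  obtain ⟨c1, hc1d⟩ : ∃ y, y = 1 + ∑ i, NumberField.house (b i) := ⟨_, rfl⟩
  obtain ⟨c3, hc3d⟩ : ∃ y, y = 1 + ∑ j, ∑ i, ‖θ i j‖ := ⟨_, rfl⟩
  obtain ⟨Cm, hCm⟩ : ∃ y, y = ∑ g, ∑ j, ‖cd g j / x g‖ := ⟨_, rfl⟩
  obtain ⟨Dr, hDr⟩ : ∃ y, y = |(D : ℝ)| := ⟨_, rfl⟩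
  obtain ⟨A, hA⟩ : ∃ y, y = 1 + ∑ i, ∑ j, NumberField.house (α i j) := ⟨_, rfl⟩
  have hc1' : 1 ≤ c1 := by
    rw [hc1d]; exact le_add_of_nonneg_right (Finset.sum_nonneg fun _ _ => NumberField.house_nonneg _)
  have hc3' : 1 ≤ c3 := by
    rw [hc3d]; exact le_add_of_nonneg_right (Finset.sum_nonneg fun _ _ => Finset.sum_nonneg fun _ _ => norm_nonneg _)
  have hA' : 1 ≤ A := by
    rw [hA]; exact le_add_of_nonneg_right (Finset.sum_nonneg fun _ _ => Finset.sum_nonneg fun _ _ => NumberField.house_nonneg _)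
  have hDr' : 0 ≤ Dr := hDr ▸ abs_nonneg _
  have hCm0 : 0 ≤ Cm := by
    rw [hCm]; exact (Finset.sum_nonneg fun _ _ => Finset.sum_nonneg fun _ _ => norm_nonneg _)
  have hαA : ∀ i j, NumberField.house (α i j) ≤ A := fun i j => by
    have := single2 (fun i j => NumberField.house (α i j)) (fun _ _ => NumberField.house_nonneg _) i j
    linarith
  obtain ⟨C, hCdef⟩ : ∃ y, y = (d : ℝ) * Cm := ⟨_, rfl⟩
  have hC0 : 0 ≤ C := by rw [hCdef]; positivity
  obtain ⟨κ, hκ⟩ : ∃ y, y = c + c1 + c3 + C + Dr + A := ⟨_, rfl⟩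
  have hexp := Real.add_one_le_exp κ
  obtain ⟨S, M, hS, hSM, hnum⟩ := numeric_contra d hd1 κ (by linarith)
  obtain ⟨L, hL⟩ : ∃ L, L = 2 * S * M ^ (d - 1) := ⟨_, rfl⟩
  obtain ⟨E, hE⟩ : ∃ E, E = d * d * L * S := ⟨_, rfl⟩
  have hM1 : 1 ≤ M := by omega
  have hL1 : 1 ≤ L := by rw [hL]; exact Nat.one_le_iff_ne_zero.2 (by positivity)
  have hL1r : (1 : ℝ) ≤ L := by exact_mod_cast hL1
  obtain ⟨T, hT⟩ : ∃ T, T = M ^ d := ⟨_, rfl⟩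
  have hT1 : 1 ≤ T := by rw [hT]; exact Nat.one_le_pow _ _ hM1
  let Λ := G → Fin L
  let lam : Λ → K := fun l => ∑ i, ((l i : ℕ) : K) * b i
  have hlam_int : ∀ l, IsIntegral ℤ (lam l) := fun l =>
    IsIntegral.sum _ fun i _ => IsIntegral.mul (by
      have := isIntegral_algebraMap (R := ℤ) (A := K) (x := ((l i : ℕ) : ℤ))
      simpa using this) (hb i)
  have hlam_house : ∀ l, NumberField.house (lam l) ≤ L * c1 := by
    intro l
    refine (NumberField.house_sum_le_sum_house _ _).trans ?_
    have : ∑ i, NumberField.house (((l i : ℕ) : K) * b i) ≤ ∑ i, (L : ℝ) * NumberField.house (b i) := by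
      refine Finset.sum_le_sum fun i _ => ?_
      rw [NumberField.house_nat_mul]
      refine mul_le_mul_of_nonneg_right ?_ (NumberField.house_nonneg _)
      exact_mod_cast (l i).2.le
    refine this.trans ?_
    rw [← Finset.mul_sum, hc1d]
    refine mul_le_mul_of_nonneg_left (by linarith) (by positivity)
  have hlam_inj : Function.Injective lam := by
    intro l l' h
    have h2 : ∀ (l : Λ) i, b.repr (lam l) i = ((l i : ℕ) : ℚ) := by
      intro l i
      have : lam l = ∑ i, ((l i : ℕ) : ℚ) • b i := by
        refine Finset.sum_congr rfl fun i _ => ?_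
        rw [Rat.smul_def, Rat.cast_natCast]
      rw [this, b.repr_sum_self]
    funext i
    have h3 := h2 l i
    rw [h, h2 l' i] at h3
    exact Fin.ext (by exact_mod_cast h3.symm)
  have hnE : ∀ (l : Λ) (r : G → ℕ), (∀ j, r j < S) → ∑ i, ∑ j, (l i : ℕ) * r j ≤ E := by
    intro l r hr
    have : ∑ i, ∑ j, (l i : ℕ) * r j ≤ ∑ i : G, ∑ j : G, L * S :=
      Finset.sum_le_sum fun i _ => Finset.sum_le_sum fun j _ => Nat.mul_le_mul (l i).2.le (hr j).le
    refine this.trans (le_of_eq ?_)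
    simp only [Finset.sum_const, Finset.card_univ, smul_eq_mul, ← hd, hE]; ring
  let co : Λ → (Sx → ℕ) → (G → ℕ) → K := fun l τ r =>
    (∏ g : Sx, σ g.1 (lam l) ^ τ g) * ∏ i, ∏ j, α i j ^ ((l i : ℕ) * r j)
  have hco : ∀ (l : Λ) (τ : Sx → ℕ) (r : G → ℕ), (∀ j, r j < S) →
      IsIntegral ℤ ((D : K) ^ E * co l τ r) ∧ NumberField.house ((D : K) ^ E * co l τ r) ≤
        Dr ^ E * (L * c1) ^ (∑ g, τ g) * A ^ E := by
    intro l τ r hr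
    have := coef_bound (fun g : Sx => σ g.1) α (fun i j => (l i : ℕ) * r j) τ (lam l) D E A (L * c1)
      hA' hαA hDint (hlam_int l) (hlam_house l) (hnE l r hr)
    rw [hDr]; exact this
  have hLc1 : 1 ≤ (L : ℝ) * c1 := one_le_mul_of_one_le_of_one_le hL1r hc1'
  obtain ⟨A', hA'd⟩ : ∃ y, y = Dr ^ E * ((L : ℝ) * c1) ^ (d * M ^ d) * A ^ E := ⟨_, rfl⟩
  obtain ⟨P, hP⟩ : ∃ y, y = c * (c * (L : ℝ) ^ d * A') := ⟨_, rfl⟩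
  have hDK : (D : K) ^ E ≠ 0 := pow_ne_zero _ (by exact_mod_cast hD0)
  have hDr1 : 1 ≤ Dr := by rw [hDr]; exact_mod_cast Int.one_le_abs hD0
  have hA'1 : 1 ≤ A' := by
    rw [hA'd]
    exact one_le_mul_of_one_le_of_one_le (one_le_mul_of_one_le_of_one_le (one_le_pow₀ hDr1) (one_le_pow₀ hLc1)) (one_le_pow₀ hA')
  -- Siegel
  obtain ⟨ξ, hξ0, hξV, hξP⟩ : ∃ ξ : Λ → NumberField.RingOfIntegers K, ξ ≠ 0 ∧
      (∀ (τ : Sx → ℕ) (r : G → ℕ), (∀ g, τ g < T) → (∀ j, r j < S) → ∑ l, (ξ l : K) * co l τ r = 0) ∧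
      ∀ l, NumberField.house (ξ l : K) ≤ P := by
    let a : Matrix ((Sx → Fin T) × (G → Fin S)) Λ (NumberField.RingOfIntegers K) := fun e l =>
      ⟨(D : K) ^ E * co l (fun g => (e.1 g : ℕ)) (fun j => (e.2 j : ℕ)), (hco l _ _ (fun j => (e.2 j).2)).1⟩
    have hcβ : Fintype.card Λ = L ^ d := by
      simp only [Λ, Fintype.card_fun, Fintype.card_fin, ← hd]
    have hcα : Fintype.card ((Sx → Fin T) × (G → Fin S)) = T ^ Fintype.card Sx * S ^ d := by
      simp only [Fintype.card_prod, Fintype.card_fun, Fintype.card_fin, ← hd]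
    obtain ⟨ξ, h1, h2, h3⟩ := hsieg _ _ a A' (by
        intro h0
        have := congrFun (congrFun h0 (fun _ => ⟨0, hT1⟩, fun _ => ⟨0, hS⟩)) (fun _ => ⟨0, hL1⟩)
        have h4 := congrArg (fun y : NumberField.RingOfIntegers K => (y : K)) this
        simp only [a, co, Matrix.zero_apply] at h4
        simp at h4
        exact hD0 h4.1) hA'1 (by rw [hcα]; positivity) (by
        rw [hcα, hcβ, hL]
        have e1 : T ^ Fintype.card Sx ≤ T ^ (d - 1) := Nat.pow_le_pow_right hT1 hcardSx
        have e2 : 2 ≤ 2 ^ d := Nat.le_self_pow (by omega) 2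
        have e3 : T ^ (d - 1) = (M ^ (d - 1)) ^ d := by rw [hT, ← pow_mul, ← pow_mul, mul_comm]
        rw [mul_pow, mul_pow, ← e3]
        calc 2 * (T ^ Fintype.card Sx * S ^ d) ≤ 2 ^ d * (T ^ (d - 1) * S ^ d) := by gcongr
          _ = _ := by ring) (by
        intro e l
        refine (hco l _ _ (fun j => (e.2 j).2)).2.trans ?_
        rw [hA'd]
        refine mul_le_mul_of_nonneg_right (mul_le_mul_of_nonneg_left (pow_le_pow_right₀ hLc1 ?_) (by positivity)) (by positivity)
        · calc ∑ g, (e.1 g : ℕ) ≤ ∑ g : Sx, T := Finset.sum_le_sum fun g _ => (e.1 g).2.le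
            _ = Fintype.card Sx * T := by simp
            _ ≤ d * M ^ d := by rw [hT]; exact Nat.mul_le_mul_right _ (by omega))
    refine ⟨ξ, h1, ?_, ?_⟩
    · intro τ r hτ hr
      have h5 := congrFun h2 (fun g => ⟨τ g, hτ g⟩, fun j => ⟨r j, hr j⟩)
      have h4 := congrArg (algebraMap (NumberField.RingOfIntegers K) K) h5
      simp only [Matrix.mulVec, dotProduct, Pi.zero_apply, a] at h4
      rw [map_sum] at h4
      simp only [map_mul, map_zero] at h4
      have h6 : (D : K) ^ E * ∑ l, (ξ l : K) * co l τ r = 0 := by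
        rw [← h4, Finset.mul_sum]
        refine Finset.sum_congr rfl fun l _ => ?_
        change _ = ((D : K) ^ E * co l τ r) * (ξ l : K)
        rw [mul_comm (ξ l : K), ← mul_assoc]
      exact (mul_eq_zero.1 h6).resolve_left hDK
    · intro l
      have := h3 l
      rw [hcβ] at this
      rw [hP]; push_cast at this; exact this
  let V : (Sx → ℕ) → (G → ℕ) → K := fun τ r => ∑ l, (ξ l : K) * co l τ r
  have hex : ∃ N, ∃ τ : Sx → ℕ, ∑ g, τ g = N ∧ ∃ r : G → ℕ, (∀ j, r j < S) ∧ V τ r ≠ 0 := by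
    by_contra hno
    push Not at hno
    apply hξ0
    have hz := vander_zero (fun l => σ g1 (lam l)) (fun l => (ξ l : K))
      ((σ g1).injective.comp hlam_inj) (fun k => by
        have := hno _ (Pi.single (⟨g1, hg1⟩ : Sx) k) rfl (fun _ => 0) (fun _ => hS)
        rw [← this]
        refine Finset.sum_congr rfl fun l _ => ?_
        simp only [co, mul_zero, pow_zero, Finset.prod_const_one, mul_one]
        congr 1
        rw [Finset.prod_eq_single (⟨g1, hg1⟩ : Sx)]
        · simp
        · intro g _ hg; simp [Pi.single_eq_of_ne hg]
        · simp)
    funext l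
    have := congrFun hz l
    exact NumberField.RingOfIntegers.coe_eq_zero_iff.1 this
  let N := Nat.find hex
  obtain ⟨τ, hτ, r, hr, hVne⟩ := Nat.find_spec hex
  have hmin : ∀ τ : Sx → ℕ, ∑ g, τ g < N → ∀ r : G → ℕ, (∀ j, r j < S) → V τ r = 0 := by
    intro τ hτ r hr
    have := Nat.find_min hex hτ
    push Not at this
    exact this τ rfl r hr
  change ∑ g, τ g = N at hτ
  clear_value N
  have hNT : M ^ d ≤ N := by
    rw [← hT]
    by_contra hlt
    push Not at hlt
    refine hVne (hξV τ r (fun g => ?_) hr)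
    have := Finset.single_le_sum (f := τ) (fun _ _ => Nat.zero_le _) (mem_univ g)
    omega
  let z : Λ → G → ℂ := fun l j => ∑ i, ((l i : ℕ) : ℂ) * θ i j
  let u : Λ → Sx → ℂ := fun l g => ψ (σ g.1 (lam l))
  have hzsum : ∀ l j, z l j = ∑ g, ψ (σ g (lam l * b j)) * x g := by
    intro l j
    simp only [z, lam, hθ, Finset.mul_sum]
    rw [Finset.sum_comm]
    refine Finset.sum_congr rfl fun g _ => ?_
    rw [Finset.sum_mul, map_sum, map_sum, Finset.sum_mul]
    refine Finset.sum_congr rfl fun i _ => ?_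
    rw [mul_assoc ((l i : ℕ) : K), map_mul (σ g) ((l i : ℕ) : K), map_mul ψ, map_natCast, map_natCast]
    ring
  have hψco : ∀ l τ r, ψ (co l τ r) = Complex.exp (∑ j, (r j : ℂ) * z l j) * ∏ g, u l g ^ τ g := by
    intro l τ r
    simp only [co, map_mul, map_prod, map_pow, z, u]
    rw [exp_theta_pow, mul_comm]
    congr 1
    refine Finset.prod_congr rfl fun i _ => Finset.prod_congr rfl fun j _ => ?_
    rw [hθ, hα]
  have hψV : ∀ τ r, ψ (V τ r) = ∑ l, ψ (ξ l) * Complex.exp (∑ j, (r j : ℂ) * z l j) * ∏ g, u l g ^ τ g := by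
    intro τ r
    simp only [V, map_sum, map_mul, hψco, mul_assoc]
  obtain ⟨R, hR⟩ : ∃ y, y = (N : ℝ) ^ ((1 : ℝ) / d) := ⟨_, rfl⟩
  obtain ⟨Q, hQ⟩ : ∃ y, y = (L : ℝ) ^ d * (P * (Dr ^ E * (L * c1) ^ N * A ^ E)) := ⟨_, rfl⟩
  have hall := fun m h1 h2 => hnum N m L E hNT h1 h2 hL hE c c1 c3 C Dr A (by linarith) (by linarith)
    (by linarith) hC0 hDr' (by linarith) (by linarith) (by linarith) (by linarith) (by linarith)
    (by linarith) (by linarith) A' P Q _ R hA'd hP hQ hR rfl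
  have hMR : (M : ℝ) ≤ R := (hall N le_rfl (Nat.le_mul_of_pos_left _ (by omega))).1
  have h2SR : 2 * (S : ℝ) ≤ R := le_trans (by exact_mod_cast hSM) hMR
  obtain ⟨m, hm1, hm2, hbd⟩ := upper_bound (fun l => ψ (ξ l)) u z (fun j g => ψ (σ g.1 (b j)) * x g.1)
    (fun g j => cd g.1 j / x g.1) (by
      intro l j
      rw [hzsum]
      have e1 : ∑ g, ψ (σ g (lam l * b j)) * x g = ∑ g ∈ univ.filter (fun g => x g ≠ 0), ψ (σ g (lam l * b j)) * x g := by
        rw [Finset.sum_filter]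
        refine Finset.sum_congr rfl fun g _ => ?_
        split_ifs with hg
        · rfl
        · rw [not_not.1 hg, mul_zero]
      rw [e1, Finset.sum_subtype (p := fun g => x g ≠ 0) _ (by simp)]
      refine Finset.sum_congr rfl fun g _ => ?_
      simp only [u, map_mul]; ring) (by
      intro l g
      simp only [hzsum, Finset.mul_sum]
      rw [Finset.sum_comm]
      have : ∀ h, ∑ j, cd g.1 j / x g.1 * (ψ (σ h (lam l * b j)) * x h) = if h = g.1 then u l g else 0 := by
        intro h
        have e1 : ∑ j, cd g.1 j / x g.1 * (ψ (σ h (lam l * b j)) * x h) =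
          (ψ (σ h (lam l)) * x h / x g.1) * ∑ j, cd g.1 j * ψ (σ h (b j)) := by
          rw [Finset.mul_sum]
          refine Finset.sum_congr rfl fun j _ => ?_
          rw [map_mul, map_mul]; ring
        rw [e1, hcd]
        split_ifs with hh
        · subst hh
          rw [mul_one, mul_div_assoc, div_self g.2, mul_one]
        · rw [mul_zero]
      rw [Finset.sum_congr rfl fun h _ => this h]
      simp) Cm (by
      intro g j
      rw [hCm]
      exact single2 (fun g j => ‖cd g j / x g‖) (fun _ _ => norm_nonneg _) g.1 j) S N P (c3 * L) R hS
    (one_le_mul_of_one_le_of_one_le hc3' hL1r) h2SR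
    (fun l => (NumberField.norm_embedding_le_house _ ψ).trans (hξP l)) (by
      intro l j
      calc ‖z l j‖ ≤ ∑ i, ‖((l i : ℕ) : ℂ) * θ i j‖ := norm_sum_le _ _
        _ ≤ ∑ i, (L : ℝ) * ‖θ i j‖ := by
          refine Finset.sum_le_sum fun i _ => ?_
          rw [norm_mul, Complex.norm_natCast]
          refine mul_le_mul_of_nonneg_right ?_ (norm_nonneg _)
          exact_mod_cast (l i).2.le
        _ = (∑ i, ‖θ i j‖) * L := by rw [← Finset.mul_sum, mul_comm]
        _ ≤ c3 * L := by
          refine mul_le_mul_of_nonneg_right ?_ (by positivity)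
          rw [hc3d]
          have := Finset.single_le_sum (f := fun j => ∑ i, ‖θ i j‖) (fun _ _ => Finset.sum_nonneg fun _ _ => norm_nonneg _) (mem_univ j)
          linarith)
    (fun τ hτ r hr => by rw [← hψV, hmin τ hτ r hr, map_zero]) τ hτ r hr
  rw [← hψV] at hbd
  rw [← hd] at hm2 hbd
  have hcardΛ : (Fintype.card Λ : ℝ) = (L : ℝ) ^ d := by
    simp only [Λ, Fintype.card_fun, Fintype.card_fin, ← hd]; push_cast; rfl
  rw [hcardΛ, ← hCdef] at hbd
  have hfin := (hall m hm1 hm2).2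
  have hyint : IsIntegral ℤ ((D : K) ^ E * V τ r) := by
    have : (D : K) ^ E * V τ r = ∑ l, (ξ l : K) * ((D : K) ^ E * co l τ r) := by
      simp only [V, Finset.mul_sum]
      exact Finset.sum_congr rfl fun l _ => by ring
    rw [this]
    exact IsIntegral.sum _ fun l _ => (ξ l).2.mul (hco l τ r hr).1
  have hyhouse : NumberField.house ((D : K) ^ E * V τ r) ≤ Q := by
    have : (D : K) ^ E * V τ r = ∑ l, (ξ l : K) * ((D : K) ^ E * co l τ r) := by
      simp only [V, Finset.mul_sum]
      exact Finset.sum_congr rfl fun l _ => by ring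
    rw [this]
    refine (NumberField.house_sum_le_sum_house _ _).trans ?_
    refine (Finset.sum_le_sum (g := fun _ => P * (Dr ^ E * (L * c1) ^ N * A ^ E)) fun l _ => ?_).trans ?_
    · refine (NumberField.house_mul_le _ _).trans ?_
      have := (hco l τ r hr).2
      rw [hτ] at this
      exact mul_le_mul (hξP l) this (NumberField.house_nonneg _) ((NumberField.house_nonneg _).trans (hξP l))
    · rw [Finset.sum_const, Finset.card_univ, nsmul_eq_mul, hcardΛ, hQ]
  have h1 := one_le_norm_norm _ hyint (mul_ne_zero hDK hVne)
  have h2 := NumberField.norm_norm_le_norm_mul_house_pow ((D : K) ^ E * V τ r) ψ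
  rw [Module.finrank_eq_card_basis b, ← hd] at h2
  have h3 : ‖ψ ((D : K) ^ E * V τ r)‖ = Dr ^ E * ‖ψ (V τ r)‖ := by
    rw [map_mul, norm_mul, map_pow, norm_pow, map_intCast, Complex.norm_intCast, hDr]
  rw [h3] at h2
  have h4 : Dr ^ E * ‖ψ (V τ r)‖ * NumberField.house ((D : K) ^ E * V τ r) ^ (d - 1) ≤ _ :=
    mul_le_mul (mul_le_mul_of_nonneg_left hbd (pow_nonneg hDr' E))
      (pow_le_pow_left₀ (NumberField.house_nonneg _) hyhouse (d - 1))
      (pow_nonneg (NumberField.house_nonneg _) _)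
      (mul_nonneg (pow_nonneg hDr' E) ((norm_nonneg _).trans hbd))
  linarith


noncomputable def ehat (q : ℕ) [NeZero q] (f : ZMod q → ℂ) (a : ZMod q) : ℂ :=
  (q : ℂ)⁻¹ * ∑ n, f n * ZMod.stdAddChar (-(a * n))

noncomputable def Lv (q : ℕ) [NeZero q] (f : ZMod q → ℂ) : ℂ :=
  -∑ a ∈ Finset.univ.erase (0 : ZMod q), ehat q f a * Complex.log (1 - ZMod.stdAddChar a)

set_option maxHeartbeats 1000000 in
theorem galois_vanish_aux (K : Type) [Field K] [NumberField K] (q : ℕ) [NeZero q]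
    [IsCyclotomicExtension {q} ℚ K] (f : ZMod q → ℤ)
    (h0 : Lv q (fun n => (f n : ℂ)) = 0) (u : (ZMod q)ˣ) : Lv q (fun n => (f (u * n) : ℂ)) = 0 := by
  classical
  have hq : 0 < q := Nat.pos_of_ne_zero (NeZero.ne q)
  have hqK : (q : K) ≠ 0 := by exact_mod_cast hq.ne'
  have irr := Polynomial.cyclotomic.irreducible_rat hq
  let ζ : K := IsCyclotomicExtension.zeta q ℚ K
  have hζ : IsPrimitiveRoot ζ q := IsCyclotomicExtension.zeta_spec q ℚ K
  let χ : AddChar (ZMod q) K := AddChar.zmodChar q hζ.pow_eq_one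
  have hprim : IsPrimitiveRoot (ZMod.stdAddChar (1 : ZMod q)) q := by
    rw [IsPrimitiveRoot.iff_def]
    constructor
    · rw [← AddChar.map_nsmul_eq_pow]; simp
    · intro l hl
      rw [← AddChar.map_nsmul_eq_pow, ← AddChar.map_zero_eq_one (ZMod.stdAddChar (N := q))] at hl
      have := ZMod.injective_stdAddChar hl
      rw [nsmul_one] at this
      exact (ZMod.natCast_eq_zero_iff _ _).1 this
  let ψ' : K →ₐ[ℚ] ℂ := (hζ.embeddingsEquivPrimitiveRoots ℂ irr).symm
    ⟨ZMod.stdAddChar (1 : ZMod q), (mem_primitiveRoots hq).2 hprim⟩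
  have hψζ : ψ' ζ = ZMod.stdAddChar (1 : ZMod q) := by
    rw [← IsPrimitiveRoot.embeddingsEquivPrimitiveRoots_apply_coe hζ ℂ irr, Equiv.apply_symm_apply]
  let ψ : K →+* ℂ := ψ'
  have hψχ : ∀ a, ψ (χ a) = ZMod.stdAddChar a := by
    intro a
    have h1 : ψ (χ a) = ψ' ζ ^ a.val := by
      simp only [χ, AddChar.zmodChar_apply]; exact map_pow ψ' _ _
    rw [h1, hψζ, ← AddChar.map_nsmul_eq_pow]
    simp
  let σ' : (ZMod q)ˣ → (K ≃ₐ[ℚ] K) := fun h => (IsCyclotomicExtension.autEquivPow K irr).symm h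
  have hσζ : ∀ h, σ' h ζ = ζ ^ (h : ZMod q).val := by
    intro h
    have := IsPrimitiveRoot.autToPow_spec ℚ hζ (σ' h)
    rw [← this]
    have h2 : (IsCyclotomicExtension.autEquivPow K irr) (σ' h) = h := MulEquiv.apply_symm_apply _ _
    rw [IsCyclotomicExtension.autEquivPow_apply] at h2
    have h3 : (hζ.autToPow ℚ) (σ' h) = h := h2
    rw [h3]
  let σ : (ZMod q)ˣ → K →+* K := fun h => (σ' h : K →+* K)
  have hσχ : ∀ h a, σ h (χ a) = χ (h * a) := by
    intro h a
    have h1 : σ h (χ a) = (σ' h ζ) ^ a.val := by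
      simp only [χ, AddChar.zmodChar_apply]; exact map_pow (σ' h) _ _
    rw [h1, hσζ, ← pow_mul, ← AddChar.zmodChar_apply' hζ.pow_eq_one]
    congr 1
    push_cast
    simp
  have hσinj : Function.Injective σ := by
    intro g h hgh
    apply (IsCyclotomicExtension.autEquivPow K irr).symm.injective
    ext y
    exact DFunLike.congr_fun hgh y
  have hcard : Fintype.card (Module.Free.ChooseBasisIndex ℤ (NumberField.RingOfIntegers K)) =
      Fintype.card (ZMod q)ˣ := by
    rw [← Module.finrank_eq_card_basis (NumberField.integralBasis K), ZMod.card_units_eq_totient]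
    exact IsCyclotomicExtension.finrank K irr
  let b0 : Module.Basis (ZMod q)ˣ ℚ K := (NumberField.integralBasis K).reindex (Fintype.equivOfCardEq hcard)
  have hb0 : ∀ i, IsIntegral ℤ (b0 i) := by
    intro i
    simp only [b0, Module.Basis.reindex_apply, NumberField.integralBasis_apply]
    exact NumberField.RingOfIntegers.isIntegral_coe _
  have hunit : ∀ _ : (ZMod q)ˣ, IsUnit (q : ℚ) := fun _ => IsUnit.mk0 _ (by exact_mod_cast hq.ne')
  let b : Module.Basis (ZMod q)ˣ ℚ K := b0.isUnitSMul hunit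
  have hbb0 : ∀ i, b i = (q : K) * b0 i := by
    intro i
    simp only [b, Module.Basis.isUnitSMul_apply]
    rw [Rat.smul_def, Rat.cast_natCast]
  have hqint : IsIntegral ℤ (q : K) := by
    have := isIntegral_algebraMap (R := ℤ) (A := K) (x := (q : ℤ))
    simpa using this
  have hb : ∀ i, IsIntegral ℤ (b i) := fun i => by rw [hbb0]; exact hqint.mul (hb0 i)
  have hχint : ∀ a, IsIntegral ℤ (χ a) := by
    intro a
    simp only [χ, AddChar.zmodChar_apply]
    exact (hζ.isIntegral hq).pow _
  let fh : ZMod q → K := fun a => (q : K)⁻¹ * ∑ n, (f n : K) * χ (-(a * n))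
  have hfint : ∀ a, IsIntegral ℤ ((q : K) * fh a) := by
    intro a
    simp only [fh]
    rw [← mul_assoc, mul_inv_cancel₀ hqK, one_mul]
    refine IsIntegral.sum _ fun n _ => IsIntegral.mul ?_ (hχint _)
    exact isIntegral_algebraMap (R := ℤ) (A := K) (x := f n)
  have hψfh : ∀ (h : (ZMod q)ˣ) a, ψ (σ h (fh a)) = ehat q (fun n => (f ((h⁻¹ : (ZMod q)ˣ) * n) : ℂ)) a := by
    intro h a
    simp only [fh, ehat, map_mul, map_inv₀, map_natCast, map_sum, map_intCast, hσχ, hψχ]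
    congr 1
    refine Fintype.sum_equiv (Units.mulLeft h) _ _ fun n => ?_
    simp only [Units.mulLeft_apply]
    rw [Units.inv_mul_cancel_left]
    congr 2; ring
  let x : (ZMod q)ˣ → ℂ := fun h => Lv q (fun n => (f ((h⁻¹ : (ZMod q)ˣ) * n) : ℂ))
  have hxdef : ∀ h, x h = -∑ a ∈ Finset.univ.erase (0 : ZMod q), ψ (σ h (fh a)) * Complex.log (1 - ZMod.stdAddChar a) := by
    intro h
    simp only [x, Lv, hψfh]
  have : IsGalois ℚ K := IsCyclotomicExtension.isGalois {q} ℚ K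
  have htr : ∀ y : K, IsIntegral ℤ y → ∃ t : ℤ, ∑ h, ψ (σ h y) = t := by
    intro y hy
    have h1 := trace_eq_sum_automorphisms (K := ℚ) y
    obtain ⟨t, ht⟩ := IsIntegrallyClosed.isIntegral_iff.1 (Algebra.isIntegral_trace (L := ℚ) hy)
    refine ⟨t, ?_⟩
    have h2 : ∑ h, σ h y = (t : K) := by
      have h3 : ∑ h, σ h y = ∑ s : K ≃ₐ[ℚ] K, s y :=
        Fintype.sum_equiv (IsCyclotomicExtension.autEquivPow K irr).symm.toEquiv _ _ fun h => rfl
      rw [h3, ← h1, ← ht]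
      simp
    rw [← map_sum, h2, map_intCast]
  have hα : ∀ i j, ∃ α : K, Complex.exp (∑ g, ψ (σ g (b i * b j)) * x g) = ψ α := by
    intro i j
    have h1 : ∀ a, ∃ t : ℤ, ∑ h, ψ (σ h (b i * b j * fh a)) = t := by
      intro a
      apply htr
      rw [hbb0 i]
      have : (q : K) * b0 i * b j * fh a = b0 i * b j * ((q : K) * fh a) := by ring
      rw [this]
      exact ((hb0 i).mul (hb j)).mul (hfint a)
    choose t ht using h1
    refine ⟨∏ a ∈ Finset.univ.erase (0 : ZMod q), (1 - χ a) ^ (-t a), ?_⟩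
    have h2 : ∑ g, ψ (σ g (b i * b j)) * x g =
        ∑ a ∈ Finset.univ.erase (0 : ZMod q), ((-t a : ℤ) : ℂ) * Complex.log (1 - ZMod.stdAddChar a) := by
      simp only [hxdef, mul_neg, Finset.mul_sum, Finset.sum_neg_distrib]
      rw [Finset.sum_comm, ← Finset.sum_neg_distrib]
      refine Finset.sum_congr rfl fun a _ => ?_
      push_cast
      rw [← ht a, neg_mul, Finset.sum_mul]
      congr 1
      refine Finset.sum_congr rfl fun g _ => ?_
      rw [map_mul (σ g) (b i * b j) (fh a), map_mul ψ (σ g (b i * b j)), mul_assoc]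
    rw [h2, Complex.exp_sum, map_prod]
    refine Finset.prod_congr rfl fun a ha => ?_
    have hne : (1 : ℂ) - ZMod.stdAddChar a ≠ 0 := by
      intro h
      have h3 : ZMod.stdAddChar a = (1 : ℂ) := (sub_eq_zero.1 h).symm
      rw [← AddChar.map_zero_eq_one (ZMod.stdAddChar (N := q))] at h3
      exact (Finset.mem_erase.1 ha).1 (ZMod.injective_stdAddChar h3)
    rw [Complex.exp_int_mul, Complex.exp_log hne, map_zpow₀, map_sub, map_one, hψχ]
  choose α hα using hα
  have hfinal := transc ψ σ hσinj b hb x α hα 1 (by simp only [x, inv_one, Units.val_one, one_mul]; exact h0)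
  have := hfinal u⁻¹
  simp only [x, inv_inv] at this
  exact this

theorem galois_vanish (q : ℕ) [NeZero q] (f : ZMod q → ℤ)
    (h0 : Lv q (fun n => (f n : ℂ)) = 0) (u : (ZMod q)ˣ) : Lv q (fun n => (f (u * n) : ℂ)) = 0 := by
  have : NeZero ((q : ℕ) : ℚ) := ⟨by exact_mod_cast NeZero.ne q⟩
  have : @IsCyclotomicExtension {q} ℚ (CyclotomicField q ℚ) _ _ DivisionRing.toRatAlgebra := by
    have h := CyclotomicField.isCyclotomicExtension q ℚ
    have e : CyclotomicField.algebra q ℚ = (DivisionRing.toRatAlgebra : Algebra ℚ (CyclotomicField q ℚ)) :=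
      Subsingleton.elim _ _
    rw [e] at h
    exact h
  exact galois_vanish_aux (CyclotomicField q ℚ) q f h0 u


theorem log_tendsto (z : ℂ) (hz : ‖z‖ = 1) (h1 : z ≠ 1) :
    Tendsto (fun N : ℕ => ∑ n ∈ range N, z ^ n / n) atTop (𝓝 (-Complex.log (1 - z))) := by
  have hc : CauchySeq (fun N : ℕ => ∑ n ∈ range N, ((1 : ℝ) / ((n : ℝ) + 1)) • z ^ (n + 1)) := by
    refine Antitone.cauchySeq_series_mul_of_tendsto_zero_of_bounded (b := 2 / ‖z - 1‖) ?_
      tendsto_one_div_add_atTop_nhds_zero_nat ?_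
    · intro m n hmn
      exact one_div_le_one_div_of_le (by positivity) (by gcongr)
    · intro n
      have : ∑ i ∈ range n, z ^ (i + 1) = z * ((z ^ n - 1) / (z - 1)) := by
        rw [← geom_sum_eq h1, Finset.mul_sum]
        exact Finset.sum_congr rfl fun i _ => pow_succ' _ _
      rw [this, norm_mul, hz, one_mul, norm_div]
      gcongr
      refine (norm_sub_le _ _).trans ?_
      rw [norm_pow, hz]; norm_num
  obtain ⟨l, hl⟩ := cauchySeq_tendsto_of_complete hc
  have hl2 : Tendsto (fun N : ℕ => ∑ n ∈ range N, z ^ n / n) atTop (𝓝 l) := by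
    rw [← tendsto_add_atTop_iff_nat 1]
    refine hl.congr fun N => ?_
    rw [Finset.sum_range_succ']
    simp only [Nat.cast_zero, div_zero, add_zero]
    refine Finset.sum_congr rfl fun n _ => ?_
    rw [Complex.real_smul]; push_cast; ring
  have hA := Complex.tendsto_tsum_powerSeries_nhdsWithin_lt hl2
  rw [Filter.tendsto_map'_iff] at hA
  have hslit : 1 - z ∈ Complex.slitPlane := by
    rw [Complex.mem_slitPlane_iff]
    by_contra hcon
    push Not at hcon
    obtain ⟨hre, him⟩ := hcon
    simp only [Complex.sub_re, Complex.one_re, Complex.sub_im, Complex.one_im, zero_sub, neg_eq_zero] at hre him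
    have h2 : z.re ^ 2 + z.im ^ 2 = 1 := by
      have := Complex.sq_norm z
      rw [hz, Complex.normSq_apply] at this
      nlinarith
    rw [him] at h2
    apply h1
    apply Complex.ext
    · simp only [Complex.one_re]; nlinarith
    · simpa using him
  have hB : Tendsto (fun x : ℝ => -Complex.log (1 - z * (x : ℂ))) (𝓝[<] 1) (𝓝 (-Complex.log (1 - z))) := by
    have hcont : ContinuousAt (fun x : ℝ => -Complex.log (1 - z * (x : ℂ))) 1 := by
      refine ContinuousAt.neg (ContinuousAt.clog ?_ ?_)
      · fun_prop
      · simpa using hslit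
    have := hcont.tendsto.mono_left (nhdsWithin_le_nhds (s := Set.Iio 1))
    simpa using this
  have hC : Tendsto (fun x : ℝ => -Complex.log (1 - z * (x : ℂ))) (𝓝[<] 1) (𝓝 l) := by
    refine hA.congr' ?_
    have hev : ∀ᶠ x : ℝ in 𝓝[<] 1, x ∈ Set.Ioo (0 : ℝ) 1 := Ioo_mem_nhdsLT (by norm_num)
    filter_upwards [hev] with x hx
    have hlt : ‖z * (x : ℂ)‖ < 1 := by
      rw [norm_mul, hz, one_mul, Complex.norm_real, Real.norm_eq_abs, abs_of_pos hx.1]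
      exact hx.2
    rw [← (Complex.hasSum_taylorSeries_neg_log hlt).tsum_eq]
    simp only [Function.comp]
    refine tsum_congr fun n => ?_
    rw [mul_pow]; ring
  rw [tendsto_nhds_unique hB hC]
  exact hl2

theorem ehat_inv (q : ℕ) [NeZero q] (f : ZMod q → ℂ) (n : ZMod q) :
    f n = ∑ a, ehat q f a * ZMod.stdAddChar (a * n) := by
  simp only [ehat]
  have hq : (q : ℂ) ≠ 0 := by exact_mod_cast NeZero.ne q
  have h1 : ∀ a : ZMod q, (q : ℂ)⁻¹ * (∑ m, f m * ZMod.stdAddChar (-(a * m))) * ZMod.stdAddChar (a * n) =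
      ∑ m, (q : ℂ)⁻¹ * f m * ZMod.stdAddChar (a * (n - m)) := by
    intro a
    rw [Finset.mul_sum, Finset.sum_mul]
    refine Finset.sum_congr rfl fun m _ => ?_
    rw [show a * (n - m) = -(a * m) + a * n by ring, AddChar.map_add_eq_mul]; ring
  rw [Finset.sum_congr rfl fun a _ => h1 a, Finset.sum_comm]
  have h2 : ∀ m : ZMod q, ∑ a, (q : ℂ)⁻¹ * f m * ZMod.stdAddChar (a * (n - m)) = if n = m then f m else 0 := by
    intro m
    rw [← Finset.mul_sum, AddChar.sum_mulShift _ (ZMod.isPrimitive_stdAddChar q), ZMod.card]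
    simp only [sub_eq_zero]
    split_ifs
    · field_simp
    · simp
  rw [Finset.sum_congr rfl fun m _ => h2 m]
  simp

theorem period_tendsto (q : ℕ) [NeZero q] (f : ZMod q → ℂ) (h : ∑ n, f n = 0) :
    Tendsto (fun N : ℕ => ∑ n ∈ range N, f n / n) atTop (𝓝 (Lv q f)) := by
  have h0 : ehat q f 0 = 0 := by simp [ehat, h]
  have hsum : ∀ N : ℕ, ∑ n ∈ range N, f n / n = ∑ a ∈ Finset.univ.erase (0 : ZMod q),
      ehat q f a * ∑ n ∈ range N, (ZMod.stdAddChar a) ^ n / (n : ℂ) := by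
    intro N
    simp only [Finset.mul_sum]
    rw [Finset.sum_comm]
    refine Finset.sum_congr rfl fun n _ => ?_
    rw [ehat_inv q f n, ← Finset.add_sum_erase _ _ (mem_univ (0 : ZMod q)), h0, zero_mul, zero_add,
      Finset.sum_div]
    refine Finset.sum_congr rfl fun a _ => ?_
    rw [← AddChar.map_nsmul_eq_pow, nsmul_eq_mul, mul_comm a, mul_div_assoc]
  simp only [hsum, Lv]
  rw [← Finset.sum_neg_distrib]
  refine tendsto_finsetSum _ fun a ha => ?_
  rw [← mul_neg]
  refine Tendsto.const_mul _ (log_tendsto _ ?_ ?_)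
  · rw [ZMod.stdAddChar_apply]; exact Circle.norm_coe _
  · intro h3
    rw [← AddChar.map_zero_eq_one (ZMod.stdAddChar (N := q))] at h3
    exact (Finset.mem_erase.1 ha).1 (ZMod.injective_stdAddChar h3)

theorem period_sum_zero (q : ℕ) [NeZero q] (f : ZMod q → ℂ) (l : ℂ)
    (h : Tendsto (fun N : ℕ => ∑ n ∈ range N, f n / n) atTop (𝓝 l)) : ∑ n, f n = 0 := by
  have hq : (q : ℂ) ≠ 0 := by exact_mod_cast NeZero.ne q
  obtain ⟨s, hs⟩ : ∃ s, s = (∑ n, f n) / q := ⟨_, rfl⟩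
  have h1 := period_tendsto q (fun n => f n - s) (by
    rw [Finset.sum_sub_distrib, Finset.sum_const, Finset.card_univ, ZMod.card, hs, nsmul_eq_mul]
    field_simp; ring)
  have h2 := h.sub h1
  have h3 : ∀ N : ℕ, ∑ n ∈ range N, f n / n - ∑ n ∈ range N, (f n - s) / n = s * ((∑ n ∈ range N, 1 / (n : ℝ) : ℝ) : ℂ) := by
    intro N
    rw [← Finset.sum_sub_distrib]
    push_cast
    rw [Finset.mul_sum]
    exact Finset.sum_congr rfl fun n _ => by ring
  simp only [h3] at h2
  have hs0 : s = 0 := by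
    by_contra hne
    have h4 := h2.norm
    simp only [norm_mul, Complex.norm_real] at h4
    have h5 : Tendsto (fun N : ℕ => ‖∑ n ∈ range N, 1 / (n : ℝ)‖) atTop atTop := by
      have h6 : Tendsto (fun N : ℕ => ∑ n ∈ range N, 1 / (n : ℝ)) atTop atTop := by
        rw [← tendsto_add_atTop_iff_nat 1]
        refine Real.tendsto_sum_range_one_div_nat_succ_atTop.congr fun N => ?_
        rw [Finset.sum_range_succ']
        simp
      exact tendsto_norm_atTop_atTop.comp h6
    have h7 := h5.const_mul_atTop (norm_pos_iff.2 hne)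
    exact not_tendsto_nhds_of_tendsto_atTop h7 _ h4
  rw [hs] at hs0
  exact (div_eq_zero_iff.1 hs0).resolve_right hq


theorem abel_zero (c : ℕ → ℂ) (hc : Tendsto (fun n : ℕ => ∑ k ∈ Finset.Icc 1 n, c k) atTop (𝓝 0))
    (hs : ∀ ε : ℝ, 0 < ε → LSeriesSummable c ε) :
    Tendsto (fun ε : ℝ => LSeries c ε) (𝓝[>] 0) (𝓝 0) := by
  obtain ⟨B, hB⟩ : ∃ B : ℝ, ∀ n, ‖∑ k ∈ Finset.Icc 1 n, c k‖ ≤ B := by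
    obtain ⟨B, hB⟩ := hc.norm.bddAbove_range
    exact ⟨B, fun n => hB ⟨n, rfl⟩⟩
  have hB0 : 0 ≤ B := (norm_nonneg _).trans (hB 0)
  rw [Metric.tendsto_nhdsWithin_nhds]
  intro η hη
  obtain ⟨T, hT⟩ := Metric.tendsto_atTop.1 hc (η / 2) (by positivity)
  refine ⟨η / 2 / (B * (T + 1) + 1), by positivity, fun ε hε hd => ?_⟩
  have hε0 : (0 : ℝ) < ε := hε
  rw [Real.dist_eq, sub_zero, abs_of_pos hε0, lt_div_iff₀ (by positivity)] at hd
  rw [dist_zero_right]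
  have hO : (fun n : ℕ => ∑ k ∈ Finset.Icc 1 n, c k) =O[atTop] fun n : ℕ => ((n : ℝ) ^ (0 : ℝ)) := by
    refine Asymptotics.IsBigO.of_bound B (Eventually.of_forall fun n => ?_)
    simpa using hB n
  rw [LSeries_eq_mul_integral c le_rfl (s := (ε : ℂ)) (by simpa using hε0) (hs ε hε0) hO]
  rw [norm_mul, Complex.norm_real, Real.norm_eq_abs, abs_of_pos hε0]
  have hint1 : MeasureTheory.IntegrableOn (fun t : ℝ => η / 2 * t ^ (-(ε + 1))) (Set.Ioi 1) :=
    ((integrableOn_Ioi_rpow_iff one_pos).2 (by linarith)).const_mul _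
  have hint2 : MeasureTheory.IntegrableOn (Set.indicator (Set.Ioc (1 : ℝ) (T + 1)) fun _ => B) (Set.Ioi 1) := by
    refine MeasureTheory.Integrable.integrableOn ?_
    rw [MeasureTheory.integrable_indicator_iff measurableSet_Ioc]
    exact MeasureTheory.integrableOn_const (by simp)
  have hbd : ‖∫ t in Set.Ioi (1 : ℝ), (∑ k ∈ Finset.Icc 1 ⌊t⌋₊, c k) * (t : ℂ) ^ (-((ε : ℂ) + 1))‖ ≤
      ∫ t in Set.Ioi (1 : ℝ), (η / 2 * t ^ (-(ε + 1)) + Set.indicator (Set.Ioc (1 : ℝ) (T + 1)) (fun _ => B) t) := by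
    refine MeasureTheory.norm_integral_le_of_norm_le (hint1.add hint2) ?_
    refine (MeasureTheory.ae_restrict_iff' measurableSet_Ioi).2 (Eventually.of_forall fun t ht => ?_)
    have ht1 : (1 : ℝ) < t := ht
    have hnorm : ‖(t : ℂ) ^ (-((ε : ℂ) + 1))‖ = t ^ (-(ε + 1)) := by
      rw [Complex.norm_cpow_eq_rpow_re_of_pos (by linarith)]; simp
    rw [norm_mul, hnorm]
    have hp : 0 ≤ t ^ (-(ε + 1)) := by positivity
    by_cases htT : t ≤ T + 1
    · have hmem : t ∈ Set.Ioc (1 : ℝ) (T + 1) := ⟨ht1, htT⟩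
      rw [Set.indicator_of_mem hmem]
      have h1 : t ^ (-(ε + 1)) ≤ 1 := Real.rpow_le_one_of_one_le_of_nonpos ht1.le (by linarith)
      have h2 : ‖∑ k ∈ Finset.Icc 1 ⌊t⌋₊, c k‖ * t ^ (-(ε + 1)) ≤ B * 1 :=
        mul_le_mul (hB _) h1 hp hB0
      have h3 : 0 ≤ η / 2 * t ^ (-(ε + 1)) := by positivity
      linarith
    · have hmem : t ∉ Set.Ioc (1 : ℝ) (T + 1) := fun h => htT h.2
      rw [Set.indicator_of_notMem hmem, add_zero]
      refine mul_le_mul_of_nonneg_right ?_ hp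
      have := hT ⌊t⌋₊ (Nat.le_floor (by linarith))
      rw [dist_zero_right] at this
      exact this.le
  rw [MeasureTheory.integral_add hint1 hint2, MeasureTheory.integral_const_mul,
    integral_Ioi_rpow_of_lt (by linarith) one_pos, MeasureTheory.setIntegral_indicator measurableSet_Ioc] at hbd
  have hset : Set.Ioi (1 : ℝ) ∩ Set.Ioc 1 (T + 1 : ℝ) = Set.Ioc 1 (T + 1 : ℝ) :=
    Set.inter_eq_right.2 fun x hx => hx.1
  rw [hset, MeasureTheory.setIntegral_const, Real.volume_real_Ioc_of_le (by linarith [(Nat.cast_nonneg T : (0:ℝ) ≤ T)]), Real.one_rpow] at hbd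
  have h5 : η / 2 * (-1 / (-(ε + 1) + 1)) = η / 2 / ε := by
    rw [show -(ε + 1) + 1 = -ε by ring, neg_div_neg_eq]; ring
  rw [h5, smul_eq_mul] at hbd
  calc ε * _ ≤ ε * (η / 2 / ε + (T + 1 - 1) * B) := mul_le_mul_of_nonneg_left hbd hε0.le
    _ = η / 2 + ε * (T * B) := by field_simp; ring
    _ ≤ η / 2 + ε * (B * (T + 1) + 1) := by
      have : (T : ℝ) * B ≤ B * (T + 1) + 1 := by nlinarith
      have := mul_le_mul_of_nonneg_left this hε0.le
      linarith
    _ < η := by linarith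


theorem recip_hasSum (q : ℕ) (hq : q ≠ 0) :
    HasSum (fun m : ℕ => Set.indicator (Nat.factoredNumbers q.primeFactors) (fun m : ℕ => (m : ℝ)⁻¹) m)
      ((q : ℝ) / q.totient) := by
  let F : ℕ →* ℝ := ⟨⟨fun n => (n : ℝ)⁻¹, by simp⟩, fun a b => by simp [mul_comm]⟩
  have h := (EulerProduct.summable_and_hasSum_factoredNumbers_prod_filter_prime_geometric (f := F) (by
    intro p hp
    change ‖((p : ℝ))⁻¹‖ < 1
    rw [norm_inv, Real.norm_natCast]
    exact inv_lt_one_of_one_lt₀ (by exact_mod_cast hp.one_lt)) q.primeFactors).2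
  have hval : ∏ p ∈ q.primeFactors with Nat.Prime p, (1 - F p)⁻¹ = (q : ℝ) / q.totient := by
    rw [Finset.filter_true_of_mem (fun p hp => Nat.prime_of_mem_primeFactors hp), Finset.prod_inv_distrib]
    have h2 := Nat.totient_eq_mul_prod_factors q
    have h3 : (q.totient : ℝ) = q * ∏ p ∈ q.primeFactors, (1 - F p) := by
      have := congrArg (fun x : ℚ => (x : ℝ)) h2
      push_cast at this
      exact this
    have h4 : (q : ℝ) ≠ 0 := by exact_mod_cast hq
    have h5 : (q.totient : ℝ) ≠ 0 := by exact_mod_cast (Nat.totient_pos.2 (Nat.pos_of_ne_zero hq)).ne'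
    rw [h3] at h5 ⊢
    have h6 := (mul_ne_zero_iff.1 h5).2
    field_simp
  rw [hval] at h
  exact hasSum_subtype_iff_indicator.1 h

theorem decomp_exists (q : ℕ) (hq : q ≠ 0) : ∀ n : ℕ, n ≠ 0 → ∃ m k, m * k = n ∧
    m ∈ Nat.factoredNumbers q.primeFactors ∧ Nat.Coprime k q := by
  intro n
  induction n using Nat.strong_induction_on with
  | _ n ih =>
    intro hn
    by_cases hc : Nat.Coprime n q
    · refine ⟨1, n, one_mul _, ?_, hc⟩
      rw [Nat.mem_factoredNumbers']
      intro p hp h1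
      exact absurd (Nat.dvd_one.1 h1) hp.one_lt.ne'
    · obtain ⟨p, hp, hpn, hpq⟩ := Nat.Prime.not_coprime_iff_dvd.1 hc
      obtain ⟨n', rfl⟩ := hpn
      have hn' : n' ≠ 0 := by rintro rfl; simp at hn
      obtain ⟨m, k, h1, h2, h3⟩ := ih n' (by
        have := hp.two_le
        nlinarith [Nat.pos_of_ne_zero hn']) hn'
      refine ⟨p * m, k, by rw [mul_assoc, h1], ?_, h3⟩
      rw [Nat.mem_factoredNumbers'] at h2 ⊢
      intro r hr hrd
      rcases (Nat.Prime.dvd_mul hr).1 hrd with h | h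
      · rw [(Nat.prime_dvd_prime_iff_eq hr hp).1 h]
        exact Nat.mem_primeFactors.2 ⟨hp, hpq, hq⟩
      · exact h2 r hr h

theorem factored_coprime (q m k : ℕ) (hm : m ∈ Nat.factoredNumbers q.primeFactors)
    (hk : Nat.Coprime k q) : Nat.Coprime m k := by
  by_contra hc
  obtain ⟨p, hp, hpm, hpk⟩ := Nat.Prime.not_coprime_iff_dvd.1 hc
  rw [Nat.mem_factoredNumbers'] at hm
  have h1 := Nat.dvd_of_mem_primeFactors (hm p hp hpm)
  exact Nat.Prime.not_coprime_iff_dvd.2 ⟨p, hp, hpk, h1⟩ hk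

theorem conv_eq (q : ℕ) [NeZero q] (χ : DirichletCharacter ℂ q) (g : ZMod q → ℂ)
    (hg : ∀ (k : (ZMod q)ˣ) (m : ZMod q), g (m * k) = g m * χ k) (n : ℕ) (hn : n ≠ 0) :
    LSeries.convolution (Set.indicator (Nat.factoredNumbers q.primeFactors) (fun m : ℕ => g m))
      (fun k : ℕ => χ k) n = g n := by
  rw [LSeries.convolution_def]
  obtain ⟨m, k, hmk, hm, hk⟩ := decomp_exists q (NeZero.ne q) n hn
  simp only
  rw [Finset.sum_eq_single (m, k)]
  · simp only
    rw [Set.indicator_of_mem hm]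
    have := hg (ZMod.unitOfCoprime k hk) m
    rw [ZMod.coe_unitOfCoprime] at this
    rw [← this, ← hmk]; push_cast; rfl
  · rintro ⟨m', k'⟩ h hne
    simp only
    by_cases hm' : m' ∈ Nat.factoredNumbers q.primeFactors
    · by_cases hk' : Nat.Coprime k' q
      · exfalso
        apply hne
        have h1 : m' * k' = n := (Nat.mem_divisorsAntidiagonal.1 h).1
        have h2 : m ∣ m' := (factored_coprime q m k' hm hk').dvd_of_dvd_mul_right (h1 ▸ hmk ▸ Dvd.intro _ rfl)
        have h3 : m' ∣ m := (factored_coprime q m' k hm' hk).dvd_of_dvd_mul_right (hmk ▸ h1 ▸ Dvd.intro _ rfl)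
        have h4 : m' = m := Nat.dvd_antisymm h3 h2
        subst h4
        have hm0 : m' ≠ 0 := by rintro rfl; simp at hmk; exact hn hmk.symm
        have : k' = k := Nat.eq_of_mul_eq_mul_left (Nat.pos_of_ne_zero hm0) (h1.trans hmk.symm)
        rw [this]
      · have : ¬ IsUnit (k' : ZMod q) := by rwa [ZMod.isUnit_iff_coprime]
        rw [MulChar.map_nonunit _ this, mul_zero]
    · rw [Set.indicator_of_notMem hm', zero_mul]
  · intro h
    exact absurd (Nat.mem_divisorsAntidiagonal.2 ⟨hmk, hn⟩) h

theorem tendsto_one_add : Tendsto (fun ε : ℝ => (1 : ℂ) + ε) (𝓝[>] 0) (𝓝[≠] 1) := by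
  rw [tendsto_nhdsWithin_iff]
  constructor
  · have : ContinuousAt (fun ε : ℝ => (1 : ℂ) + ε) 0 := by fun_prop
    have h := this.tendsto.mono_left (nhdsWithin_le_nhds (s := Set.Ioi 0))
    simpa using h
  · filter_upwards [self_mem_nhdsWithin] with ε hε
    have : ε ≠ 0 := ne_of_gt hε
    simpa using this

theorem Linv_tendsto (q : ℕ) [NeZero q] (χ : DirichletCharacter ℂ q) :
    ∃ l : ℂ, Tendsto (fun ε : ℝ => (DirichletCharacter.LFunction χ (1 + ε))⁻¹) (𝓝[>] 0) (𝓝 l) ∧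
      ∀ᶠ ε : ℝ in 𝓝[>] 0, DirichletCharacter.LFunction χ (1 + ε) ≠ 0 := by
  by_cases hχ : χ = 1
  · subst hχ
    have h1 := (DirichletCharacter.LFunctionTrivChar_residue_one (N := q)).comp tendsto_one_add
    have hne : ∏ p ∈ q.primeFactors, (1 - ((p : ℂ))⁻¹) ≠ 0 := by
      refine Finset.prod_ne_zero_iff.2 fun p hp => ?_
      have := (Nat.prime_of_mem_primeFactors hp).one_lt
      rw [sub_ne_zero]
      intro h
      have h2 : (p : ℂ) = 1 := by rw [← inv_inv (p : ℂ), ← h, inv_one]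
      have h3 : p = 1 := by exact_mod_cast h2
      omega
    have h2 := h1.inv₀ hne
    have h3 : Tendsto (fun ε : ℝ => (ε : ℂ)) (𝓝[>] 0) (𝓝 0) := by
      have : ContinuousAt (fun ε : ℝ => (ε : ℂ)) 0 := by fun_prop
      have h := this.tendsto.mono_left (nhdsWithin_le_nhds (s := Set.Ioi 0))
      simpa using h
    have h4 := h3.mul h2
    rw [zero_mul] at h4
    refine ⟨0, h4.congr' ?_, ?_⟩
    · filter_upwards [self_mem_nhdsWithin] with ε hε
      have : (ε : ℂ) ≠ 0 := by exact_mod_cast (ne_of_gt hε : ε ≠ 0)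
      simp only [Function.comp, DirichletCharacter.LFunctionTrivChar, add_sub_cancel_left, mul_inv]
      field_simp
    · filter_upwards [h1.eventually_ne hne] with ε hε h0
      apply hε
      simp only [Function.comp, DirichletCharacter.LFunctionTrivChar, h0, mul_zero]
  · have hne := DirichletCharacter.LFunction_apply_one_ne_zero hχ
    have hc := (DirichletCharacter.differentiable_LFunction hχ).continuous.continuousAt (x := 1)
    have h1 : Tendsto (fun ε : ℝ => DirichletCharacter.LFunction χ (1 + ε)) (𝓝[>] 0) (𝓝 (DirichletCharacter.LFunction χ 1)) :=
      hc.tendsto.comp (tendsto_one_add.mono_right nhdsWithin_le_nhds)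
    exact ⟨_, h1.inv₀ hne, h1.eventually_ne hne⟩

theorem okada_char (q : ℕ) [NeZero q] (χ : DirichletCharacter ℂ q) (g : ZMod q → ℂ)
    (hg : ∀ (k : (ZMod q)ˣ) (m : ZMod q), g (m * k) = g m * χ k)
    (hlim : Tendsto (fun N : ℕ => ∑ n ∈ range N, g n / n) atTop (𝓝 0)) :
    ∑' m : ℕ, Set.indicator (Nat.factoredNumbers q.primeFactors) (fun m : ℕ => g m / m) m = 0 := by
  obtain ⟨B, hB⟩ : ∃ B : ℝ, ∀ n, ‖g n‖ ≤ B :=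
    ⟨∑ n, ‖g n‖, fun n => Finset.single_le_sum (f := fun n => ‖g n‖) (fun _ _ => norm_nonneg _) (mem_univ n)⟩
  have hB0 : 0 ≤ B := (norm_nonneg _).trans (hB 0)
  obtain ⟨U, hU⟩ : ∃ U : ℕ → ℂ, U = Set.indicator (Nat.factoredNumbers q.primeFactors) (fun m : ℕ => g m) := ⟨_, rfl⟩
  have hUB : ∀ n, ‖U n‖ ≤ B := fun n => by
    rw [hU]; exact (norm_indicator_le_norm_self _ _).trans (hB _)
  have hre : ∀ ε : ℝ, 0 < ε → 1 < ((1 : ℂ) + ε).re := fun ε hε => by simpa using hε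
  have hterm : ∀ ε : ℝ, LSeries.term (fun n : ℕ => g n / n) ε = LSeries.term (fun n : ℕ => g n) (1 + ε) := by
    intro ε
    funext n
    rw [LSeries.term_def, LSeries.term_def]
    split_ifs with h0
    · rfl
    · rw [Complex.cpow_add _ _ (by exact_mod_cast h0), Complex.cpow_one, div_div]
  have hab := abel_zero (fun n : ℕ => g n / n) (by
      rw [← tendsto_add_atTop_iff_nat 1] at hlim
      refine hlim.congr fun N => ?_
      rw [Finset.range_eq_Ico, Finset.sum_eq_sum_Ico_succ_bot (by omega)]
      simp only [Nat.cast_zero, div_zero, zero_add]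
      rfl) (by
      intro ε hε
      unfold LSeriesSummable
      rw [hterm]
      exact LSeriesSummable_of_bounded_of_one_lt_re (m := B) (fun n _ => hB n) (hre ε hε))
  have hprod : ∀ ε : ℝ, 0 < ε → LSeries (fun n : ℕ => g n / n) ε =
      LSeries U (1 + ε) * DirichletCharacter.LFunction χ (1 + ε) := by
    intro ε hε
    have h1 : LSeries (fun n : ℕ => g n / n) ε = LSeries (fun n : ℕ => g n) (1 + ε) := by
      unfold LSeries; rw [hterm]
    rw [h1, DirichletCharacter.LFunction_eq_LSeries χ (hre ε hε),
      ← LSeries_convolution' (LSeriesSummable_of_bounded_of_one_lt_re (m := B) (fun n _ => hUB n) (hre ε hε))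
      (LSeriesSummable_of_bounded_of_one_lt_re (m := 1) (fun n _ => χ.norm_le_one _) (hre ε hε))]
    refine LSeries_congr (fun {n} hn => ?_) _
    rw [hU, conv_eq q χ g hg n hn]
  obtain ⟨l, hl, hne⟩ := Linv_tendsto q χ
  have h1 := hab.mul hl
  rw [zero_mul] at h1
  have h2 : Tendsto (fun ε : ℝ => LSeries U (1 + ε)) (𝓝[>] 0) (𝓝 0) := by
    refine h1.congr' ?_
    filter_upwards [hne, self_mem_nhdsWithin] with ε h3 h4
    rw [hprod ε h4, mul_assoc, mul_inv_cancel₀ h3, mul_one]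
  have hs := (recip_hasSum q (NeZero.ne q)).summable
  have h5 : Tendsto (fun ε : ℝ => LSeries U (1 + ε)) (𝓝[>] 0)
      (𝓝 (∑' m : ℕ, Set.indicator (Nat.factoredNumbers q.primeFactors) (fun m : ℕ => g m / m) m)) := by
    unfold LSeries
    refine tendsto_tsum_of_dominated_convergence (hs.mul_left B) ?_ ?_
    · intro n
      by_cases hn : n ∈ Nat.factoredNumbers q.primeFactors
      · have hn0 : n ≠ 0 := (Nat.mem_factoredNumbers.1 hn).1
        rw [Set.indicator_of_mem hn]
        simp only [LSeries.term_def, if_neg hn0, hU, Set.indicator_of_mem hn]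
        have hn0' : (n : ℂ) ≠ 0 := by exact_mod_cast hn0
        have hcont : Continuous fun ε : ℝ => (n : ℂ) ^ ((1 : ℂ) + ε) :=
          Continuous.const_cpow (by fun_prop) (Or.inl hn0')
        have hc0 := hcont.tendsto 0
        simp only [Complex.ofReal_zero, add_zero, Complex.cpow_one] at hc0
        exact tendsto_const_nhds.div (hc0.mono_left nhdsWithin_le_nhds) hn0'
      · rw [Set.indicator_of_notMem hn]
        refine tendsto_const_nhds.congr fun ε => ?_
        rw [LSeries.term_def, hU, Set.indicator_of_notMem hn]; simp
    · filter_upwards [self_mem_nhdsWithin] with ε hε n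
      by_cases hn : n ∈ Nat.factoredNumbers q.primeFactors
      · have hn0 : n ≠ 0 := (Nat.mem_factoredNumbers.1 hn).1
        have hn1 : (1 : ℝ) ≤ n := by exact_mod_cast Nat.one_le_iff_ne_zero.2 hn0
        have hε0 : (0 : ℝ) < ε := hε
        rw [LSeries.term_def, if_neg hn0, norm_div, Set.indicator_of_mem hn, div_eq_mul_inv]
        refine mul_le_mul (hUB n) ?_ (by positivity) hB0
        rw [Complex.norm_natCast_cpow_of_pos (Nat.pos_of_ne_zero hn0)]
        refine inv_anti₀ (by positivity) ?_
        conv_lhs => rw [← Real.rpow_one (n : ℝ)]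
        refine Real.rpow_le_rpow_of_exponent_le hn1 ?_
        simp; linarith
      · rw [Set.indicator_of_notMem hn, LSeries.term_def, hU, Set.indicator_of_notMem hn]; simp
  exact tendsto_nhds_unique h5 h2


theorem okada_sum (q : ℕ) [NeZero q] (F : ZMod q → ℤ) (hF : ∀ n, |F n| ≤ 1)
    (hsum : ∑ n, (F n : ℂ) = 0)
    (hL : ∀ u : (ZMod q)ˣ, Lv q (fun n => (F (u * n) : ℂ)) = 0) :
    ∑' m : ℕ, Set.indicator (Nat.factoredNumbers q.primeFactors) (fun m : ℕ => (F m : ℂ) / m) m = 0 := by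
  have hlimF : ∀ u : (ZMod q)ˣ, Tendsto (fun N : ℕ => ∑ n ∈ range N, (F (u * n) : ℂ) / n) atTop (𝓝 0) := by
    intro u
    have h := period_tendsto q (fun n => (F (u * n) : ℂ)) (by
      rw [← hsum]
      exact (Equiv.sum_comp (Units.mulLeft u) (fun n => (F n : ℂ))))
    rwa [hL u] at h
  have hs := (recip_hasSum q (NeZero.ne q)).summable
  obtain ⟨g, hg⟩ : ∃ g : DirichletCharacter ℂ q → ZMod q → ℂ,
    g = fun χ n => ∑ h : (ZMod q)ˣ, χ h * (F (h * n) : ℂ) := ⟨_, rfl⟩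
  have hgB : ∀ χ n, ‖g χ n‖ ≤ (Fintype.card (ZMod q)ˣ : ℝ) := by
    intro χ n
    rw [hg]
    refine (norm_sum_le _ _).trans ?_
    refine (Finset.sum_le_card_nsmul _ _ 1 fun h _ => ?_).trans (by simp)
    rw [norm_mul]
    refine mul_le_one₀ (χ.norm_le_one _) (norm_nonneg _) ?_
    rw [Complex.norm_intCast]
    exact_mod_cast hF _
  have hz : ∀ χ, ∑' m : ℕ, Set.indicator (Nat.factoredNumbers q.primeFactors) (fun m : ℕ => g χ m / m) m = 0 := by
    intro χ
    refine okada_char q χ⁻¹ (g χ) ?_ ?_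
    · intro k m
      simp only [hg]
      rw [Finset.sum_mul, ← Equiv.sum_comp (Equiv.mulRight k⁻¹)]
      refine Finset.sum_congr rfl fun h _ => ?_
      rw [MulChar.inv_apply_eq_inv']
      have h1 : ((h * k⁻¹ : (ZMod q)ˣ) : ZMod q) * (m * k) = h * m := by
        have := k.inv_mul
        push_cast
        linear_combination ((h : ZMod q) * m) * this
      have h2 : χ ((h * k⁻¹ : (ZMod q)ˣ) : ZMod q) = χ h * (χ k)⁻¹ := by
        rw [Units.val_mul, map_mul]
        congr 1
        refine eq_inv_of_mul_eq_one_left ?_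
        rw [← map_mul, k.inv_mul, map_one]
      simp only [Equiv.coe_mulRight]
      rw [h1, h2]; ring
    · have := tendsto_finsetSum (univ : Finset (ZMod q)ˣ) (fun h _ => (hlimF h).const_mul (χ h))
      simp only [mul_zero, Finset.sum_const_zero] at this
      refine this.congr fun N => ?_
      simp only [hg, Finset.mul_sum, Finset.sum_div]
      rw [Finset.sum_comm]
      refine Finset.sum_congr rfl fun _ _ => Finset.sum_congr rfl fun _ _ => by ring
  have hsm : ∀ χ, Summable fun m : ℕ => Set.indicator (Nat.factoredNumbers q.primeFactors) (fun m : ℕ => g χ m / m) m := by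
    intro χ
    refine Summable.of_norm_bounded (hs.mul_left (Fintype.card (ZMod q)ˣ : ℝ)) fun m => ?_
    by_cases hm : m ∈ Nat.factoredNumbers q.primeFactors
    · rw [Set.indicator_of_mem hm, Set.indicator_of_mem hm, norm_div, div_eq_mul_inv, Complex.norm_natCast]
      exact mul_le_mul_of_nonneg_right (hgB _ _) (by positivity)
    · rw [Set.indicator_of_notMem hm, Set.indicator_of_notMem hm]; simp
  have htot : ∀ n, ∑ χ, g χ n = (q.totient : ℂ) * F n := by
    intro n
    simp only [hg]
    rw [Finset.sum_comm]
    simp only [← Finset.sum_mul]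
    rw [Finset.sum_eq_single 1]
    · rw [Units.val_one, DirichletCharacter.sum_characters_eq]; simp
    · intro u _ hu
      rw [DirichletCharacter.sum_characters_eq, if_neg (by simpa using hu), zero_mul]
    · simp
  have h1 := Summable.tsum_finsetSum (s := (univ : Finset (DirichletCharacter ℂ q))) (fun χ _ => hsm χ)
  rw [Finset.sum_congr rfl (fun χ _ => hz χ), Finset.sum_const_zero] at h1
  have h2 : (fun m : ℕ => ∑ χ : DirichletCharacter ℂ q, Set.indicator (Nat.factoredNumbers q.primeFactors) (fun m : ℕ => g χ m / m) m)
     = fun m : ℕ => (q.totient : ℂ) * Set.indicator (Nat.factoredNumbers q.primeFactors) (fun m : ℕ => (F m : ℂ) / m) m := by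
    funext m
    by_cases hm : m ∈ Nat.factoredNumbers q.primeFactors
    · simp only [Set.indicator_of_mem hm]
      rw [← Finset.sum_div, htot, mul_div_assoc]
    · simp only [Set.indicator_of_notMem hm]; simp
  rw [h2, tsum_mul_left] at h1
  rcases mul_eq_zero.1 h1 with h | h
  · exfalso
    have := Nat.totient_pos.2 (NeZero.pos q)
    have h' : q.totient = 0 := by exact_mod_cast h
    omega
  · exact h

theorem tot_bound (q : ℕ) [NeZero q] (F : ZMod q → ℤ) (hF : ∀ n, |F n| ≤ 1) (hF1 : |F 1| = 1)
    (h0 : ∑' m : ℕ, Set.indicator (Nat.factoredNumbers q.primeFactors) (fun m : ℕ => (F m : ℂ) / m) m = 0) :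
    2 ≤ (q : ℝ) / q.totient := by
  have hsum := recip_hasSum q (NeZero.ne q)
  have hs := hsum.summable
  have h1m : 1 ∈ Nat.factoredNumbers q.primeFactors := by
    rw [Nat.mem_factoredNumbers]; simp
  have hle : ∀ m : ℕ, ‖Set.indicator (Nat.factoredNumbers q.primeFactors) (fun m : ℕ => (F m : ℂ) / m) m‖ ≤
      Set.indicator (Nat.factoredNumbers q.primeFactors) (fun m : ℕ => (m : ℝ)⁻¹) m := by
    intro m
    by_cases hm : m ∈ Nat.factoredNumbers q.primeFactors
    · rw [Set.indicator_of_mem hm, Set.indicator_of_mem hm, norm_div, Complex.norm_natCast, div_eq_mul_inv, Complex.norm_intCast]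
      refine mul_le_of_le_one_left (by positivity) ?_
      exact_mod_cast hF _
    · rw [Set.indicator_of_notMem hm, Set.indicator_of_notMem hm]; simp
  have hsn := Summable.of_norm_bounded hs hle
  have hnn := hs.of_nonneg_of_le (fun _ => norm_nonneg _) hle
  rw [hsn.tsum_eq_add_tsum_ite 1, Set.indicator_of_mem h1m] at h0
  have e1 := hsum.tsum_eq
  rw [hs.tsum_eq_add_tsum_ite 1, Set.indicator_of_mem h1m] at e1
  have hle' : ∀ m : ℕ, ‖(if m = 1 then 0 else Set.indicator (Nat.factoredNumbers q.primeFactors) (fun m : ℕ => (F m : ℂ) / m) m)‖ ≤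
      (if m = 1 then 0 else Set.indicator (Nat.factoredNumbers q.primeFactors) (fun m : ℕ => (m : ℝ)⁻¹) m) := by
    intro m
    split_ifs
    · simp
    · exact hle m
  have hs' : Summable fun m : ℕ => (if m = 1 then 0 else Set.indicator (Nat.factoredNumbers q.primeFactors) (fun m : ℕ => (m : ℝ)⁻¹) m) := by
    refine hs.of_nonneg_of_le (fun m => (norm_nonneg _).trans (hle' m)) (fun m => ?_)
    split_ifs
    · exact (norm_nonneg _).trans (hle m)
    · exact le_rfl
  have h3 := tsum_of_norm_bounded hs'.hasSum hle'
  have h4 := eq_neg_of_add_eq_zero_right h0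
  rw [h4, norm_neg] at h3
  have h5 : ‖((F ((1:ℕ) : ZMod q) : ℂ) / ((1 : ℕ) : ℂ))‖ = 1 := by
    simp only [Nat.cast_one, div_one, Complex.norm_intCast]
    exact_mod_cast hF1
  rw [h5] at h3
  simp only [Nat.cast_one, inv_one] at e1
  linarith

theorem false_bound (q : ℕ) (hq : 1 < q) (f : ℕ → ℤ) (hper : ∀ n, f (n + q) = f n)
    (hpm : ∀ n, ¬ q ∣ n → f n = 1 ∨ f n = -1) (hz : ∀ n, q ∣ n → f n = 0)
    (hlim : Tendsto (fun N : ℕ => ∑ n ∈ Finset.Icc 1 N, (f n : ℝ) / n) atTop (nhds 0)) :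
    2 ≤ (q : ℝ) / q.totient := by
  have : NeZero q := ⟨by omega⟩
  have hmod : ∀ n, f (n % q) = f n := fun n => Function.Periodic.map_mod_nat hper n
  obtain ⟨F, hFd⟩ : ∃ F : ZMod q → ℤ, F = fun a => f a.val := ⟨_, rfl⟩
  have hFn : ∀ n : ℕ, F n = f n := fun n => by rw [hFd]; simp only [ZMod.val_natCast, hmod]
  have habs : ∀ n, |F n| ≤ 1 := by
    intro n
    rw [hFd]
    by_cases h : q ∣ n.val
    · simp [hz _ h]
    · rcases hpm _ h with h | h <;> simp [h]
  have h1 : |F 1| = 1 := by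
    have := hFn 1
    rw [Nat.cast_one] at this
    rw [this]
    rcases hpm 1 (by intro h; have := Nat.le_of_dvd one_pos h; omega) with h | h <;> simp [h]
  have hlimC : Tendsto (fun N : ℕ => ∑ n ∈ range N, (F n : ℂ) / n) atTop (𝓝 0) := by
    rw [← tendsto_add_atTop_iff_nat 1]
    have h2 := (Complex.continuous_ofReal.tendsto 0).comp hlim
    rw [Complex.ofReal_zero] at h2
    refine h2.congr fun N => ?_
    simp only [Function.comp]
    push_cast
    rw [Finset.range_eq_Ico, Finset.sum_eq_sum_Ico_succ_bot (by omega)]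
    simp only [Nat.cast_zero, div_zero, zero_add, hFn]
    rfl
  have hs := period_sum_zero q (fun n => (F n : ℂ)) 0 hlimC
  have hL := tendsto_nhds_unique (period_tendsto q (fun n => (F n : ℂ)) hs) hlimC
  exact tot_bound q F habs h1 (okada_sum q F habs hs (galois_vanish q F hL))


theorem totient_prod_primes (t : Finset ℕ) (ht : ∀ p ∈ t, p.Prime) :
    ((Nat.totient (∏ p ∈ t, p) : ℕ) : ℝ) = ∏ p ∈ t, ((p : ℝ) - 1) := by
  have h := Nat.totient_eq_mul_prod_factors (∏ p ∈ t, p)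
  rw [Nat.primeFactors_prod ht] at h
  have h2 : ((Nat.totient (∏ p ∈ t, p) : ℕ) : ℚ) = ∏ p ∈ t, ((p : ℚ) - 1) := by
    rw [h, Nat.cast_prod, ← Finset.prod_mul_distrib]
    refine Finset.prod_congr rfl fun p hp => ?_
    have : (p : ℚ) ≠ 0 := by exact_mod_cast (ht p hp).ne_zero
    field_simp
  exact_mod_cast h2

theorem ratio_le (q : ℕ) (hq : q ≠ 0) :
    (q : ℝ) / q.totient ≤ ∑ d ∈ q.divisors, 1 / (d.totient : ℝ) := by
  have h1 : (q : ℝ) / q.totient = ∏ p ∈ q.primeFactors, (1 + 1 / ((p : ℝ) - 1)) := by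
    have h := Nat.totient_eq_mul_prod_factors q
    have h' : (q.totient : ℝ) = q * ∏ p ∈ q.primeFactors, (1 - (p : ℝ)⁻¹) := by
      have h2 := congrArg (fun x : ℚ => (x : ℝ)) h
      push_cast at h2
      exact h2
    have hq0 : (q : ℝ) ≠ 0 := by exact_mod_cast hq
    rw [h', div_mul_eq_div_div, div_self hq0, one_div, ← Finset.prod_inv_distrib]
    refine Finset.prod_congr rfl fun p hp => ?_
    have hp1 : (1 : ℝ) < p := by exact_mod_cast (Nat.prime_of_mem_primeFactors hp).one_lt
    have a : (p : ℝ) - 1 ≠ 0 := by linarith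
    have b : (p : ℝ) ≠ 0 := by linarith
    field_simp
    ring
  rw [h1, Finset.prod_one_add]
  have hpr : ∀ t ∈ q.primeFactors.powerset, ∀ p ∈ t, p.Prime := fun t ht p hp =>
    Nat.prime_of_mem_primeFactors (Finset.mem_powerset.1 ht hp)
  have hinj : Set.InjOn (fun t : Finset ℕ => ∏ p ∈ t, p) q.primeFactors.powerset := by
    intro s hs t ht hst
    have := congrArg Nat.primeFactors hst
    simp only at this
    rwa [Nat.primeFactors_prod (hpr s hs), Nat.primeFactors_prod (hpr t ht)] at this
  have h2 : ∑ t ∈ q.primeFactors.powerset, ∏ p ∈ t, 1 / ((p : ℝ) - 1)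
      = ∑ d ∈ q.primeFactors.powerset.image (fun t : Finset ℕ => ∏ p ∈ t, p), 1 / (d.totient : ℝ) := by
    rw [Finset.sum_image hinj]
    refine Finset.sum_congr rfl fun t ht => ?_
    rw [totient_prod_primes t (hpr t ht)]
    simp
  rw [h2]
  refine Finset.sum_le_sum_of_subset_of_nonneg ?_ fun _ _ _ => by positivity
  intro d hd
  obtain ⟨t, ht, rfl⟩ := Finset.mem_image.1 hd
  rw [Nat.mem_divisors]
  exact ⟨(Finset.prod_dvd_prod_of_subset _ _ _ (Finset.mem_powerset.1 ht)).trans (Nat.prod_primeFactors_dvd q), hq⟩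

abbrev OT := {d : ℕ // Odd d ∧ 3 ≤ d}

theorem a_summable (q : ℕ) (hq : q ≠ 0) :
    Summable (fun d : OT => if (d : ℕ) ∣ q then 1 / ((d : ℕ).totient : ℝ) else 0) := by
  refine summable_of_hasFiniteSupport ?_
  refine Set.Finite.subset ((Set.Finite.preimage (f := fun d : OT => (d : ℕ)) Subtype.val_injective.injOn (q.divisors.finite_toSet))) ?_
  intro d hd
  simp only [Function.mem_support, ne_eq] at hd
  simp only [Set.mem_preimage, Finset.mem_coe, Nat.mem_divisors]
  refine ⟨?_, hq⟩
  by_contra h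
  simp [h] at hd

theorem a_tsum (q : ℕ) (hq : Odd q) :
    (q : ℝ) / q.totient - 1 ≤ ∑' d : OT, if (d : ℕ) ∣ q then 1 / ((d : ℕ).totient : ℝ) else 0 := by
  have hq0 : q ≠ 0 := by rintro rfl; simp at hq
  have h1 := ratio_le q hq0
  have h1m : 1 ∈ q.divisors := Nat.one_mem_divisors.2 hq0
  rw [← Finset.add_sum_erase _ _ h1m] at h1
  simp only [Nat.totient_one, Nat.cast_one, div_one] at h1
  have h2 : ∑ d ∈ q.divisors.erase 1, 1 / (d.totient : ℝ) ≤
      ∑' d : OT, if (d : ℕ) ∣ q then 1 / ((d : ℕ).totient : ℝ) else 0 := by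
    have hmem : ∀ d ∈ q.divisors.erase 1, Odd d ∧ 3 ≤ d := by
      intro d hd
      rw [Finset.mem_erase, Nat.mem_divisors] at hd
      have ho := Odd.of_dvd_nat hq hd.2.1
      refine ⟨ho, ?_⟩
      obtain ⟨k, rfl⟩ := ho
      have := hd.1
      omega
    have h3 : ∑ d ∈ (q.divisors.erase 1).subtype (fun d => Odd d ∧ 3 ≤ d), 1 / (((d : OT) : ℕ).totient : ℝ)
        = ∑ d ∈ q.divisors.erase 1, 1 / (d.totient : ℝ) :=
      Finset.sum_subtype_of_mem (fun d : ℕ => 1 / (d.totient : ℝ)) hmem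
    rw [← h3]
    refine le_trans (le_of_eq ?_) ((a_summable q hq0).sum_le_tsum ((q.divisors.erase 1).subtype (fun d => Odd d ∧ 3 ≤ d)) fun d _ => by positivity)
    refine Finset.sum_congr rfl fun d hd => ?_
    rw [Finset.mem_subtype, Finset.mem_erase, Nat.mem_divisors] at hd
    rw [if_pos hd.2.1]
  linarith

theorem cnt_bounds (l : ℕ) (hl : Odd l) (X : ℕ) :
    (X + 1) / (4 * l) ≤ ((Finset.Icc 1 X).filter (fun q => q % 4 = 1 ∧ l ∣ q)).card ∧
    ((Finset.Icc 1 X).filter (fun q => q % 4 = 1 ∧ l ∣ q)).card ≤ (X + 1) / (4 * l) + 1 := by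
  have hl0 : 0 < l := hl.pos
  have hco : Nat.Coprime 4 l := by
    have : Nat.Coprime (2 ^ 2) l := Nat.Coprime.pow_left 2 (Nat.coprime_two_left.2 hl)
    exact this
  obtain ⟨v, hv1, hv2⟩ := Nat.chineseRemainder hco 1 0
  have he : ((Finset.Icc 1 X).filter (fun q => q % 4 = 1 ∧ l ∣ q)).card = (X + 1).count (· ≡ v [MOD 4 * l]) := by
    rw [Nat.count_eq_card_filter_range]
    congr 1
    ext x
    simp only [Finset.mem_filter, Finset.mem_Icc, Finset.mem_range]
    rw [← Nat.modEq_and_modEq_iff_modEq_mul hco]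
    constructor
    · rintro ⟨⟨h1, h2⟩, h3, h4⟩
      refine ⟨by omega, ?_, ?_⟩
      · exact (show x ≡ 1 [MOD 4] from h3).trans hv1.symm
      · exact ((Nat.modEq_zero_iff_dvd).2 h4).trans hv2.symm
    · rintro ⟨h1, h2, h3⟩
      have h4 : x % 4 = 1 := h2.trans hv1
      exact ⟨⟨by omega, by omega⟩, h4, (Nat.modEq_zero_iff_dvd).1 (h3.trans hv2)⟩
  rw [he, Nat.count_modEq_card _ (by omega)]
  split_ifs <;> omega

theorem cnt_tendsto (l : ℕ) (hl : Odd l) :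
    Tendsto (fun X : ℕ => (((Finset.Icc 1 X).filter (fun q => q % 4 = 1 ∧ l ∣ q)).card : ℝ) / ((X : ℝ) / 4))
      atTop (𝓝 (1 / (l : ℝ))) := by
  have hl0 : (0 : ℝ) < l := by exact_mod_cast hl.pos
  have hlo : Tendsto (fun X : ℕ => 1 / (l : ℝ) - 4 / (X : ℝ)) atTop (𝓝 (1 / (l : ℝ))) := by
    simpa using (tendsto_const_nhds (x := 1 / (l : ℝ))).sub (tendsto_const_div_atTop_nhds_zero_nat (4 : ℝ))
  have hhi : Tendsto (fun X : ℕ => 1 / (l : ℝ) + 8 / (X : ℝ)) atTop (𝓝 (1 / (l : ℝ))) := by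
    simpa using (tendsto_const_nhds (x := 1 / (l : ℝ))).add (tendsto_const_div_atTop_nhds_zero_nat (8 : ℝ))
  refine tendsto_of_tendsto_of_tendsto_of_le_of_le' hlo hhi ?_ ?_
  · filter_upwards [eventually_gt_atTop 0] with X hX
    have hX' : (0 : ℝ) < X := by exact_mod_cast hX
    rw [le_div_iff₀ (by positivity)]
    have h1 := (cnt_bounds l hl X).1
    have h2 : (X + 1) < (4 * l) * ((X + 1) / (4 * l) + 1) := Nat.lt_mul_div_succ _ (by have := hl.pos; omega)
    have h3 : X + 1 < (4 * l) * (((Finset.Icc 1 X).filter (fun q => q % 4 = 1 ∧ l ∣ q)).card + 1) :=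
      lt_of_lt_of_le h2 (Nat.mul_le_mul_left _ (by omega))
    obtain ⟨c, hc⟩ : ∃ c, c = ((Finset.Icc 1 X).filter (fun q => q % 4 = 1 ∧ l ∣ q)).card := ⟨_, rfl⟩
    rw [← hc] at h3 ⊢
    have h4 : (X : ℝ) + 1 < (4 * l) * (c + 1) := by exact_mod_cast h3
    have : (1 / (l : ℝ) - 4 / X) * (X / 4) = X / (4 * l) - 1 := by field_simp
    rw [this, sub_le_iff_le_add, div_le_iff₀ (by positivity)]
    linarith
  · filter_upwards [eventually_gt_atTop 0] with X hX
    have hX' : (0 : ℝ) < X := by exact_mod_cast hX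
    rw [div_le_iff₀ (by positivity)]
    have h1 := (cnt_bounds l hl X).2
    obtain ⟨c, hc⟩ : ∃ c, c = ((Finset.Icc 1 X).filter (fun q => q % 4 = 1 ∧ l ∣ q)).card := ⟨_, rfl⟩
    rw [← hc] at h1 ⊢
    have h2 : (c : ℝ) ≤ ((X + 1) / (4 * l) : ℕ) + 1 := by exact_mod_cast h1
    have h3 : (((X + 1) / (4 * l) : ℕ) : ℝ) ≤ ((X + 1 : ℕ) : ℝ) / ((4 * l : ℕ) : ℝ) := Nat.cast_div_le
    push_cast at h3
    have : (1 / (l : ℝ) + 8 / X) * (X / 4) = X / (4 * l) + 2 := by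
      field_simp
      ring
    rw [this]
    have h5 : ((X : ℝ) + 1) / (4 * l) = X / (4 * l) + 1 / (4 * l) := by ring
    have h6 : 1 / (4 * (l : ℝ)) ≤ 1 := by
      rw [div_le_one (by positivity)]
      have : (1 : ℝ) ≤ l := by exact_mod_cast hl.pos
      linarith
    linarith

theorem cnt_le (l : ℕ) (hl : 0 < l) (X : ℕ) :
    (((Finset.Icc 1 X).filter (fun q => q % 4 = 1 ∧ l ∣ q)).card : ℝ) / ((X : ℝ) / 4) ≤ 4 / l := by
  have hl0 : (0 : ℝ) < l := by exact_mod_cast hl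
  rcases Nat.eq_zero_or_pos X with rfl | hX
  · simp; positivity
  have hX' : (0 : ℝ) < X := by exact_mod_cast hX
  have h1 : ((Finset.Icc 1 X).filter (fun q => q % 4 = 1 ∧ l ∣ q)).card ≤ X / l := by
    rw [← Nat.Ioc_filter_dvd_card_eq_div]
    refine Finset.card_le_card fun q hq => ?_
    simp only [Finset.mem_filter, Finset.mem_Icc, Finset.mem_Ioc] at hq ⊢
    exact ⟨⟨by omega, hq.1.2⟩, hq.2.2⟩
  have h2 : (((Finset.Icc 1 X).filter (fun q => q % 4 = 1 ∧ l ∣ q)).card : ℝ) ≤ (X : ℝ) / l :=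
    (Nat.cast_le.2 h1).trans Nat.cast_div_le
  rw [div_le_iff₀ (by positivity)]
  refine h2.trans (le_of_eq ?_)
  field_simp

theorem totient_pow_ge (d : ℕ) (hd : Odd d) : d ^ 5 ≤ d.totient ^ 8 := by
  induction d using Nat.recOnPosPrimePosCoprime with
  | zero => simp
  | one => simp
  | prime_pow p n hp hn =>
    have hp3 : 3 ≤ p := by
      have h2 := hp.two_le
      rcases h2.lt_or_eq with h | h
      · omega
      · subst h
        exfalso
        rw [Nat.odd_pow_iff hn.ne'] at hd
        revert hd; decide
    have key : p ^ 5 ≤ (p - 1) ^ 8 := by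
      obtain ⟨m, rfl⟩ := Nat.exists_eq_add_of_le hp3
      have h1 : 3 + m - 1 = m + 2 := by omega
      rw [h1]
      ring_nf
      nlinarith [Nat.zero_le m, Nat.zero_le (m^2), Nat.zero_le (m^3), Nat.zero_le (m^4), Nat.zero_le (m^5), Nat.zero_le (m^6), Nat.zero_le (m^7), Nat.zero_le (m^8)]
    obtain ⟨k, rfl⟩ : ∃ k, n = k + 1 := ⟨n - 1, by omega⟩
    rw [Nat.totient_prime_pow hp (by omega), mul_pow, Nat.add_sub_cancel, pow_succ p k, mul_pow]
    refine Nat.mul_le_mul ?_ key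
    exact Nat.pow_le_pow_right (pow_pos hp.pos k) (by norm_num)
  | coprime a b ha hb hab iha ihb =>
    rw [Nat.odd_mul] at hd
    rw [Nat.totient_mul hab, mul_pow, mul_pow]
    exact Nat.mul_le_mul (iha hd.1) (ihb hd.2)

theorem term_le (a b : ℕ) (ha : Odd a) (hb : Odd b) :
    1 / ((a.totient : ℝ) * b.totient * (Nat.lcm a b : ℝ)) ≤
      1 / (a : ℝ) ^ (9 / 8 : ℝ) * (1 / (b : ℝ) ^ (9 / 8 : ℝ)) := by
  have ha0 : (0 : ℝ) < a := by exact_mod_cast ha.pos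
  have hb0 : (0 : ℝ) < b := by exact_mod_cast hb.pos
  have hl0 : 0 < Nat.lcm a b := Nat.lcm_pos ha.pos hb.pos
  have h1 : (a * b) ^ 9 ≤ (a.totient * b.totient * Nat.lcm a b) ^ 8 := by
    have e1 := totient_pow_ge a ha
    have e2 := totient_pow_ge b hb
    have e3 : a ^ 4 ≤ Nat.lcm a b ^ 4 := Nat.pow_le_pow_left (Nat.le_of_dvd hl0 (Nat.dvd_lcm_left a b)) 4
    have e4 : b ^ 4 ≤ Nat.lcm a b ^ 4 := Nat.pow_le_pow_left (Nat.le_of_dvd hl0 (Nat.dvd_lcm_right a b)) 4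
    calc (a * b) ^ 9 = (a ^ 5 * b ^ 5) * (a ^ 4 * b ^ 4) := by ring
      _ ≤ (a.totient ^ 8 * b.totient ^ 8) * (Nat.lcm a b ^ 4 * Nat.lcm a b ^ 4) :=
        Nat.mul_le_mul (Nat.mul_le_mul e1 e2) (Nat.mul_le_mul e3 e4)
      _ = _ := by ring
  have h2 : ((a : ℝ) * b) ^ 9 ≤ ((a.totient : ℝ) * b.totient * (Nat.lcm a b : ℝ)) ^ 8 := by exact_mod_cast h1
  rw [one_div_mul_one_div, ← Real.mul_rpow ha0.le hb0.le]
  refine one_div_le_one_div_of_le (by positivity) ?_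
  refine le_of_pow_le_pow_left₀ (n := 8) (by norm_num) (by positivity) (le_trans (le_of_eq ?_) h2)
  rw [← Real.rpow_natCast, ← Real.rpow_mul (by positivity), ← Real.rpow_natCast]
  norm_num

theorem double_summable : Summable (fun d : OT × OT =>
      1 / (((Nat.totient (d.1 : ℕ) : ℝ)) * (Nat.totient (d.2 : ℕ) : ℝ) *
        (Nat.lcm (d.1 : ℕ) (d.2 : ℕ) : ℝ))) := by
  have h1 : Summable (fun d : OT => 1 / ((d : ℕ) : ℝ) ^ (9 / 8 : ℝ)) :=
    (Real.summable_one_div_nat_rpow.2 (by norm_num)).comp_injective Subtype.val_injective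
  have h2 := h1.mul_of_nonneg h1 (fun _ => by positivity) (fun _ => by positivity)
  refine h2.of_nonneg_of_le (fun d => by positivity) fun d => ?_
  exact term_le _ _ d.1.2.1 d.2.2.1

theorem false_pair (q : ℕ) (hq4 : q % 4 = 1) (hq1 : q ≠ 1) (hf : ErdosConjectureFalse q) :
    1 ≤ ∑' d : OT × OT, if Nat.lcm (d.1 : ℕ) (d.2 : ℕ) ∣ q then
      1 / (((d.1 : ℕ).totient : ℝ) * ((d.2 : ℕ).totient : ℝ)) else 0 := by
  obtain ⟨f, ⟨hper, hpm, hz⟩, hlim⟩ := hf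
  have hq : 1 < q := by omega
  have h2 : 2 ≤ (q : ℝ) / q.totient := by
    refine false_bound q hq (fun n => if n = 0 then 0 else f n) ?_ ?_ ?_ ?_
    · intro n
      rcases Nat.eq_zero_or_pos n with rfl | hn
      · simp only [if_true, zero_add]
        rw [if_neg (by omega)]
        exact hz q (by omega) dvd_rfl
      · rw [if_neg (by omega), if_neg (by omega)]
        exact hper n hn
    · intro n hn
      have hn0 : n ≠ 0 := by rintro rfl; exact hn (dvd_zero _)
      simp only [if_neg hn0]
      exact hpm n (by omega) hn
    · intro n hn
      split_ifs with h
      · rfl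
      · exact hz n (by omega) hn
    · refine hlim.congr fun N => Finset.sum_congr rfl fun n hn => ?_
      rw [Finset.mem_Icc] at hn
      rw [if_neg (by omega)]
  have hodd : Odd q := Nat.odd_iff.2 (by omega)
  have h3 := a_tsum q hodd
  have hs := a_summable q (by omega)
  have h4 := tsum_mul_tsum_of_summable_norm hs.norm hs.norm
  have h5 : (1 : ℝ) ≤ ∑' d : OT, if (d : ℕ) ∣ q then 1 / ((d : ℕ).totient : ℝ) else 0 := by linarith
  have h6 := one_le_mul_of_one_le_of_one_le h5 h5
  rw [h4] at h6
  refine h6.trans (le_of_eq (tsum_congr fun d => ?_))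
  simp only [Nat.lcm_dvd_iff, ite_and, one_div, mul_inv]
  split_ifs <;> simp

theorem pair_summable (q : ℕ) (hq : q ≠ 0) :
    Summable fun d : OT × OT => if Nat.lcm (d.1 : ℕ) (d.2 : ℕ) ∣ q then
      1 / (((d.1 : ℕ).totient : ℝ) * ((d.2 : ℕ).totient : ℝ)) else 0 := by
  have hs := a_summable q hq
  have h := hs.mul_of_nonneg hs (fun d => by positivity) (fun d => by positivity)
  refine h.congr fun d => ?_
  simp only [Nat.lcm_dvd_iff, ite_and, one_div, mul_inv]
  split_ifs <;> simp

open scoped Classical in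
theorem count_le (X : ℕ) :
    (((Finset.Icc 1 X).filter (fun q => q % 4 = 1 ∧ ErdosConjectureFalse q)).card : ℝ) ≤
    1 + ∑' d : OT × OT, (1 / (((d.1 : ℕ).totient : ℝ) * ((d.2 : ℕ).totient : ℝ))) *
      (((Finset.Icc 1 X).filter (fun q => q % 4 = 1 ∧ Nat.lcm (d.1 : ℕ) (d.2 : ℕ) ∣ q)).card : ℝ) := by
  have hsw := Summable.tsum_finsetSum (s := (Finset.Icc 1 X).filter (fun q => q % 4 = 1))
    (fun q hq => pair_summable q (by
      rw [Finset.mem_filter, Finset.mem_Icc] at hq; omega))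
  have he : ∀ d : OT × OT, (∑ q ∈ (Finset.Icc 1 X).filter (fun q => q % 4 = 1),
      if Nat.lcm (d.1 : ℕ) (d.2 : ℕ) ∣ q then
      1 / (((d.1 : ℕ).totient : ℝ) * ((d.2 : ℕ).totient : ℝ)) else 0) =
      (1 / (((d.1 : ℕ).totient : ℝ) * ((d.2 : ℕ).totient : ℝ))) *
      (((Finset.Icc 1 X).filter (fun q => q % 4 = 1 ∧ Nat.lcm (d.1 : ℕ) (d.2 : ℕ) ∣ q)).card : ℝ) := by
    intro d
    rw [← Finset.sum_filter, Finset.filter_filter, Finset.sum_const, nsmul_eq_mul, mul_comm]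
  rw [tsum_congr he] at hsw
  rw [hsw]
  have hsub : ((Finset.Icc 1 X).filter (fun q => q % 4 = 1 ∧ ErdosConjectureFalse q)) ⊆
      insert 1 (((Finset.Icc 1 X).filter (fun q => q % 4 = 1)).filter (fun q => q ≠ 1 ∧ ErdosConjectureFalse q)) := by
    intro q hq
    simp only [Finset.mem_filter, Finset.mem_insert] at hq ⊢
    tauto
  have h1 := (Finset.card_le_card hsub).trans (Finset.card_insert_le _ _)
  have h2 : (((Finset.Icc 1 X).filter (fun q => q % 4 = 1 ∧ ErdosConjectureFalse q)).card : ℝ) ≤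
    ((((Finset.Icc 1 X).filter (fun q => q % 4 = 1)).filter (fun q => q ≠ 1 ∧ ErdosConjectureFalse q)).card : ℝ) + 1 := by
    exact_mod_cast h1
  refine h2.trans ?_
  rw [add_comm]
  gcongr
  rw [Finset.card_eq_sum_ones, Nat.cast_sum, Finset.sum_filter]
  refine Finset.sum_le_sum fun q hq => ?_
  rw [Finset.mem_filter] at hq
  split_ifs with h
  · rw [Nat.cast_one]
    exact false_pair q hq.2 h.1 h.2
  · exact tsum_nonneg fun d => by positivity

theorem main_tendsto : Tendsto (fun X : ℕ => 1 / ((X : ℝ) / 4) +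
    ∑' d : OT × OT, (1 / (((d.1 : ℕ).totient : ℝ) * ((d.2 : ℕ).totient : ℝ))) *
      ((((Finset.Icc 1 X).filter (fun q => q % 4 = 1 ∧ Nat.lcm (d.1 : ℕ) (d.2 : ℕ) ∣ q)).card : ℝ) / ((X : ℝ) / 4)))
    atTop (𝓝 (∑' d : OT × OT, 1 / (((Nat.totient (d.1 : ℕ) : ℝ)) * (Nat.totient (d.2 : ℕ) : ℝ) *
        (Nat.lcm (d.1 : ℕ) (d.2 : ℕ) : ℝ)))) := by
  have h0 : Tendsto (fun X : ℕ => 1 / ((X : ℝ) / 4)) atTop (𝓝 0) := by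
    refine (tendsto_const_div_atTop_nhds_zero_nat (4 : ℝ)).congr fun X => ?_
    rw [one_div_div]
  rw [← zero_add (∑' d : OT × OT, 1 / (((Nat.totient (d.1 : ℕ) : ℝ)) * (Nat.totient (d.2 : ℕ) : ℝ) *
        (Nat.lcm (d.1 : ℕ) (d.2 : ℕ) : ℝ)))]
  refine h0.add ?_
  refine tendsto_tsum_of_dominated_convergence (double_summable.mul_left 4) ?_ ?_
  · intro d
    have hodd : Odd (Nat.lcm (d.1 : ℕ) (d.2 : ℕ)) :=
      Odd.of_dvd_nat (Nat.odd_mul.2 ⟨d.1.2.1, d.2.2.1⟩) (Nat.lcm_dvd_mul _ _)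
    have := (cnt_tendsto _ hodd).const_mul (1 / (((d.1 : ℕ).totient : ℝ) * ((d.2 : ℕ).totient : ℝ)))
    rwa [one_div_mul_one_div] at this
  · refine Eventually.of_forall fun X d => ?_
    rw [Real.norm_of_nonneg (by positivity)]
    have hl : 0 < Nat.lcm (d.1 : ℕ) (d.2 : ℕ) := Nat.lcm_pos d.1.2.1.pos d.2.2.1.pos
    refine (mul_le_mul_of_nonneg_left (cnt_le _ hl X) (by positivity)).trans (le_of_eq ?_)
    rw [div_mul_div_comm, one_mul, mul_one_div]

open scoped Classical in
theorem erdos_false_density_second_moment :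
    Summable (fun d : {d : ℕ // Odd d ∧ 3 ≤ d} × {d : ℕ // Odd d ∧ 3 ≤ d} =>
      1 / (((Nat.totient (d.1 : ℕ) : ℝ)) * (Nat.totient (d.2 : ℕ) : ℝ) *
        (Nat.lcm (d.1 : ℕ) (d.2 : ℕ) : ℝ))) ∧
    atTop.limsup (fun X : ℕ =>
      (((Finset.Icc 1 X).filter
        (fun q => q % 4 = 1 ∧ ErdosConjectureFalse q)).card : ℝ) / ((X : ℝ) / 4)) ≤
      ∑' d : {d : ℕ // Odd d ∧ 3 ≤ d} × {d : ℕ // Odd d ∧ 3 ≤ d},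
        1 / (((Nat.totient (d.1 : ℕ) : ℝ)) * (Nat.totient (d.2 : ℕ) : ℝ) *
          (Nat.lcm (d.1 : ℕ) (d.2 : ℕ) : ℝ)) := by
  refine ⟨double_summable, ?_⟩
  refine le_trans ?_ (le_of_eq main_tendsto.limsup_eq)
  refine limsup_le_limsup (Eventually.of_forall fun X => ?_) ?_ main_tendsto.isBoundedUnder_le
  · refine (div_le_div_of_nonneg_right (count_le X) (by positivity)).trans (le_of_eq ?_)
    rw [add_div, ← tsum_div_const]
    congr 1
    refine tsum_congr fun d => ?_
    rw [mul_div_assoc]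
  · refine IsBoundedUnder.isCoboundedUnder_le ⟨0, ?_⟩
    rw [eventually_map]
    exact Eventually.of_forall fun X => by positivity
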